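/- arXiv:math/0601473 — 8 statements merged into one kernel-verified Lean document; each statement's English description precedes it below -/
import Mathlib

section
/- For every x ∈ ℝ₊ = [0,∞), the orbit {T_ω(x) : ω ∈ G} of x under the semigroup G is dense in ℝ₊. -/
/-!
An orbit `S` is stable under both maps, so if an interval `(u, v)` misses `S`, then so do its
preimages `(u / a, v / a)` and `((u - 1) / b, (v - 1) / b)`. The first operation preserves the
relative length `(v - u) / u`, while the second preserves `(v - u) / (u + c)`, where
`-c = -1 / (b - 1)` is the fixed point of `z ↦ b * z + 1`. Starting from a missed interval with
`0 < u`, push it far to the right with the first operation, where the two relative lengths almost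
agree, and bring it back with the second until its left end lies in `(1, b + 1]`
(`exists_gap_descend`). There the two relative lengths differ by the factor
`1 + c / u ≥ 1 + c / (b + 1)`, so a round trip multiplies `(v - u) / u` by at least a fixed
constant larger than `1` (`exists_gap_expand`). Iterating gives arbitrarily long missed intervals
with left end in `(1, b + 1]`. This is absurd, because `S` contains a point beyond `b + 1`.
-/

/-- The open interval `(u, v)` contains no point of `S`. It is not required to be a maximal such
interval. -/
def IsGap (S : Set ℝ) (u v : ℝ) : Prop := ∀ y ∈ S, u < y → v ≤ y

lemma IsGap.div_pow {S : Set ℝ} {a : ℝ} (ha : 0 < a) (h0 : ∀ y ∈ S, a * y ∈ S) {u v : ℝ}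
    (h : IsGap S u v) (n : ℕ) : IsGap S (u / a ^ n) (v / a ^ n) := by
  induction n with
  | zero => simpa using h
  | succ n ih =>
    intro y hy huy
    have han : 0 < a ^ n := pow_pos ha n
    have := ih (a * y) (h0 y hy) (by
      rw [div_lt_iff₀ (by positivity)] at huy ⊢
      rw [pow_succ] at huy; linarith)
    rw [div_le_iff₀ (by positivity)] at this ⊢
    rw [pow_succ]; linarith

lemma IsGap.sub_div {S : Set ℝ} {b : ℝ} (hb : 0 < b) (h1 : ∀ y ∈ S, b * y + 1 ∈ S) {u v : ℝ}
    (h : IsGap S u v) : IsGap S ((u - 1) / b) ((v - 1) / b) := by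
  intro y hy huy
  rw [div_lt_iff₀ hb] at huy
  have := h _ (h1 y hy) (by linarith)
  rw [div_le_iff₀ hb]
  linarith

/-- Repeated preimages under `z ↦ b * z + 1` bring the left end of a gap into `(1, b + 1]` without
changing `(v - u) / (u + c)`. The bound by `b ^ n` only serves to make the induction terminate. -/
lemma exists_gap_descend {S : Set ℝ} {b c : ℝ} (hb : 1 < b) (hc : b * c = 1 + c)
    (h1 : ∀ y ∈ S, b * y + 1 ∈ S) (n : ℕ) :
    ∀ u v : ℝ, 1 < u → u + c ≤ (b + 1 + c) * b ^ n → IsGap S u v →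
      ∃ u' v', 1 < u' ∧ u' ≤ b + 1 ∧ IsGap S u' v' ∧
        (v' - u') * (u + c) = (v - u) * (u' + c) := by
  induction n with
  | zero =>
    intro u v hu hle hg
    exact ⟨u, v, hu, by simp at hle; linarith, hg, rfl⟩
  | succ n ih =>
    intro u v hu hle hg
    have hb0 : 0 < b := by linarith
    by_cases hub : u ≤ b + 1
    · exact ⟨u, v, hu, hub, hg, rfl⟩
    push Not at hub
    have hshift : (u - 1) / b + c = (u + c) / b := by
      field_simp; linarith
    obtain ⟨u', v', h1u, hub', hg', he⟩ := ih ((u - 1) / b) ((v - 1) / b)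
      (by rw [lt_div_iff₀ hb0]; linarith)
      (by
        rw [hshift, div_le_iff₀ hb0]
        rw [pow_succ] at hle; linarith) (hg.sub_div hb0 h1)
    refine ⟨u', v', h1u, hub', hg', ?_⟩
    rw [hshift] at he
    field_simp at he
    linarith

/-- A round trip multiplies the relative length `(v - u) / u` of a gap by at least
`1 + c / (2 * (b + 1))`. -/
lemma exists_gap_expand {S : Set ℝ} {a b c : ℝ} (ha : 0 < a) (ha1 : a < 1) (hb : 1 < b)
    (hc0 : 0 < c) (hc : b * c = 1 + c) (h0 : ∀ y ∈ S, a * y ∈ S)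
    (h1 : ∀ y ∈ S, b * y + 1 ∈ S) {u v d : ℝ} (hu : 0 < u) (hd : 0 ≤ d) (huv : d * u ≤ v - u)
    (hg : IsGap S u v) :
    ∃ u' v', 1 < u' ∧ u' ≤ b + 1 ∧ IsGap S u' v' ∧
      (1 + c / (2 * (b + 1))) * d * u' ≤ v' - u' := by
  obtain ⟨n, hn⟩ := exists_pow_lt_of_lt_one
    (show 0 < u / (2 * (b + 1) + c) by positivity) ha1
  have han : 0 < a ^ n := pow_pos ha n
  set U := u / a ^ n with hU
  set V := v / a ^ n with hV
  have hUbig : 2 * (b + 1) + c ≤ U := by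
    rw [hU, le_div_iff₀ han]
    rw [lt_div_iff₀ (by positivity)] at hn
    linarith
  have hUV : d * U ≤ V - U := by
    rw [hU, hV, ← _root_.sub_div, ← mul_div_assoc]
    gcongr
  obtain ⟨m, hm⟩ := pow_unbounded_of_one_lt (U + c) hb
  obtain ⟨u', v', hu', hub, hg', he⟩ := exists_gap_descend hb hc h1 m U V (by linarith)
    (by nlinarith [pow_pos (show 0 < b by linarith) m]) (hg.div_pow ha h0 n)
  refine ⟨u', v', hu', hub, hg', ?_⟩
  have hUc : 0 < U + c := by linarith
  refine le_of_mul_le_mul_right ?_ hUc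
  rw [he]
  have hkey : (1 + c / (2 * (b + 1))) * u' * (U + c) ≤ U * (u' + c) := by
    have hB : 0 < 2 * (b + 1) := by linarith
    set e := c / (2 * (b + 1)) with hedef
    have he0 : 0 < e := by positivity
    have hce : c = e * (2 * (b + 1)) := by rw [hedef]; field_simp
    -- As `u' ≤ b + 1`, the constant `c` is at least `2 * e * u'`; the rest is `2 * (b + 1) + c ≤ U`.
    have h3 : U * (2 * e * u') ≤ U * c := by
      apply mul_le_mul_of_nonneg_left _ (by linarith)
      rw [hce]; nlinarith
    have h4 : e * u' * (2 * (b + 1) + c) ≤ e * u' * U := by gcongr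
    have h5 : e * u' * (2 * (b + 1)) = u' * c := by rw [hce]; ring
    nlinarith
  calc (1 + c / (2 * (b + 1))) * d * u' * (U + c)
      = d * ((1 + c / (2 * (b + 1))) * u' * (U + c)) := by ring
    _ ≤ d * (U * (u' + c)) := by gcongr
    _ = d * U * (u' + c) := by ring
    _ ≤ (V - U) * (u' + c) := by gcongr

lemma not_isGap {S : Set ℝ} {a b x : ℝ} (ha : 0 < a) (ha1 : a < 1) (hb : 1 < b)
    (hx : 0 ≤ x) (hxS : x ∈ S) (h0 : ∀ y ∈ S, a * y ∈ S)
    (h1 : ∀ y ∈ S, b * y + 1 ∈ S) {u v : ℝ} (hu : 0 < u) (huv : u < v) : ¬ IsGap S u v := by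
  intro hg
  obtain ⟨c, hc0, hc⟩ : ∃ c : ℝ, 0 < c ∧ b * c = 1 + c := by
    have : 0 < b - 1 := by linarith
    refine ⟨1 / (b - 1), by positivity, ?_⟩
    field_simp; ring
  obtain ⟨y, hyS, hy⟩ : ∃ y ∈ S, b + 1 < y := by
    have key : ∀ n : ℕ, ∃ y ∈ S, (n : ℝ) ≤ y := by
      intro n
      induction n with
      | zero => exact ⟨x, hxS, by simpa using hx⟩
      | succ n ih =>
        obtain ⟨y, hy, hny⟩ := ih
        refine ⟨_, h1 y hy, ?_⟩
        push_cast
        nlinarith [(Nat.cast_nonneg n : (0 : ℝ) ≤ n)]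
    obtain ⟨n, hn⟩ := exists_nat_gt (b + 1)
    obtain ⟨y, hy, hny⟩ := key n
    exact ⟨y, hy, by linarith⟩
  set k := 1 + c / (2 * (b + 1)) with hk
  have hk1 : 1 < k := by
    have : 0 < c / (2 * (b + 1)) := by positivity
    linarith
  set d := (v - u) / u with hd
  have hd0 : 0 < d := div_pos (by linarith) hu
  have iter : ∀ n : ℕ, ∃ u' v', 1 < u' ∧ u' ≤ b + 1 ∧ IsGap S u' v' ∧
      k ^ (n + 1) * d * u' ≤ v' - u' := by
    intro n
    induction n with
    | zero =>
      simpa using exists_gap_expand ha ha1 hb hc0 hc h0 h1 hu hd0.le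
        (by rw [hd]; field_simp; rfl) hg
    | succ n ih =>
      obtain ⟨u', v', hu', -, hg', hl⟩ := ih
      obtain ⟨u'', v'', h₁, h₂, h₃, h₄⟩ := exists_gap_expand ha ha1 hb hc0 hc h0 h1
        (by linarith) (by positivity) hl hg'
      refine ⟨u'', v'', h₁, h₂, h₃, ?_⟩
      rw [pow_succ k (n + 1), mul_comm (k ^ (n + 1)) k, mul_assoc k]
      exact h₄
  obtain ⟨n, hn⟩ := pow_unbounded_of_one_lt (y / d) hk1
  obtain ⟨u', v', h₁, h₂, h₃, h₄⟩ := iter n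
  have hv : v' ≤ y := h₃ y hyS (by linarith)
  have hmono : k ^ n ≤ k ^ (n + 1) := pow_le_pow_right₀ hk1.le (by omega)
  rw [div_lt_iff₀ hd0] at hn
  have h5 : k ^ n * d ≤ k ^ (n + 1) * d := by gcongr
  nlinarith

/-- **Theorem B.** Let `T₀(x) = a·x` and `T₁(x) = b·x + 1` on `ℝ₊ = [0,∞)`, where
`0 < a < 1 < b`. For a finite 0-1 word `ω` (an element of the free semigroup `G` on two
generators), `T_ω` is the composition applying `T_{ω₀}` first. Then for every `x ∈ ℝ₊`
the orbit `{T_ω(x) : ω ∈ G}` is dense in `ℝ₊`. -/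
theorem orbit_dense (a b : ℝ) (ha : 0 < a) (ha1 : a < 1) (hb : 1 < b)
    (x : ℝ) (hx : 0 ≤ x) :
    closure {y : ℝ | ∃ ω : List Bool,
      y = ω.foldl (fun z i => if i then b * z + 1 else a * z) x} = Set.Ici 0 := by
  apply Set.Subset.antisymm
  · refine closure_minimal ?_ isClosed_Ici
    rintro y ⟨ω, rfl⟩
    induction ω using List.reverseRecOn with
    | nil => simpa using hx
    | append_singleton l i ih =>
      rw [List.foldl_append]
      simp only [Set.mem_Ici] at ih
      cases i <;> simp only [List.foldl_cons, List.foldl_nil, Set.mem_Ici] <;> simp <;> positivity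
  · intro z hz
    rw [Metric.mem_closure_iff]
    intro ε hε
    have hz0 : (0 : ℝ) ≤ z := hz
    -- Take the interval to the right of `z`, so that its left end is positive even if `z = 0`.
    have hng := not_isGap (x := x) (u := z + ε / 3) (v := z + ε / 2) ha ha1 hb hx
      (S := {y : ℝ | ∃ ω : List Bool,
        y = ω.foldl (fun z i => if i then b * z + 1 else a * z) x})
      ⟨[], rfl⟩
      (by
        rintro y ⟨ω, rfl⟩
        exact ⟨ω ++ [false], by simp [List.foldl_append]⟩)
      (by
        rintro y ⟨ω, rfl⟩
        exact ⟨ω ++ [true], by simp [List.foldl_append]⟩)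
      (by linarith) (by linarith)
    unfold IsGap at hng
    push Not at hng
    obtain ⟨y, hy, h1, h2⟩ := hng
    refine ⟨y, hy, ?_⟩
    rw [Real.dist_eq, abs_lt]
    constructor <;> linarith
end

section
/- For any Borel probability measure μ on the one-point compactification ℝ̄₊ = [0,∞] there exists a sequence (g_i)_{i≥1} of elements of G such that for every x ∈ ℝ₊ and every continuous function f : ℝ̄₊ → ℝ one has (1/n)·Σ_{i=1}^{n} f(T_{g_i}(x)) → ∫ f dμ as n → ∞; moreover the sequence (g_i) can be chosen so that every element of G appears in it. -/
/-!
Every `T_ω` is an affine map `x ↦ l * x + c` on `ℝ₊` with `l, c ≥ 0` (`IsAffineWord`). The proof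
combines three facts.

* The orbit of `0` is dense (`exists_const_near`). Follow a backward orbit of a target `t`: divide
  by `a` while the current value is `< 1`, and otherwise apply `T₁⁻¹`. The values stay in a bounded
  interval `[0, M]`, and at each time `t = l * y + c` with `T_ω(x) = l * x + c` for the word `ω`
  read so far. Each use of `T₁⁻¹` increases `c` by `l / b`, for the new slope `l`, while `c ≤ t`;
  hence the slopes cannot stay bounded below, and `l * y = t - c` becomes arbitrarily small.
* Consequently every neighbourhood of every point of `[0, ∞]` contains `T_ω([0, N])` for some word
  `ω` (`exists_word_mem`): for a finite point, precede a word from the first fact by many copies of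
  `T₀` to flatten the slope; for `∞`, use powers of `T₁`.
* There is a sequence `t` in `[0, ∞]` whose empirical measures converge weakly to `μ`
  (`exists_equidistributed`): by the strong law of large numbers, almost every sequence of
  independent samples of `μ` works.

At indices that are not perfect squares, the word `g i` is chosen to send `[0, i]` into the
`1 / (i + 1)`-neighbourhood of `t i`, for a metric transported from `[0, 1]`. At perfect squares,
which have density zero, `g` enumerates all words. Uniform continuity of `f` then gives the limit.
-/

open MeasureTheory Filter
open scoped ENNReal

/-- The generators `T₀(x) = a·x`, `T₁(x) = b·x + 1`, extended to the one-point
compactification `ℝ̄₊ = [0,∞]` (modelled by `ℝ≥0∞`) by `T₀(∞) = T₁(∞) = ∞`. -/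
noncomputable def Tmap (a b : ℝ) (i : Bool) (x : ℝ≥0∞) : ℝ≥0∞ :=
  if i then ENNReal.ofReal b * x + 1 else ENNReal.ofReal a * x

/-- The word `w` acts on `[0, ∞)` as `r ↦ l * r + c`, with nonnegative coefficients. -/
def IsAffineWord (a b : ℝ) (w : List Bool) (l c : ℝ) : Prop :=
  0 ≤ l ∧ 0 ≤ c ∧ ∀ r : ℝ, 0 ≤ r →
    w.foldl (fun z j => Tmap a b j z) (ENNReal.ofReal r) = ENNReal.ofReal (l * r + c)

lemma isAffineWord_nil (a b : ℝ) : IsAffineWord a b [] 1 0 :=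
  ⟨zero_le_one, le_rfl, fun r _ => by simp⟩

lemma IsAffineWord.cons_false {a b : ℝ} (ha : 0 < a) {w : List Bool} {l c : ℝ}
    (h : IsAffineWord a b w l c) : IsAffineWord a b (false :: w) (l * a) c := by
  obtain ⟨hl, hc, h⟩ := h
  refine ⟨by positivity, hc, fun r hr => ?_⟩
  have : Tmap a b false (ENNReal.ofReal r) = ENNReal.ofReal (a * r) := by
    simp [Tmap, ENNReal.ofReal_mul ha.le]
  rw [List.foldl_cons, this, h _ (by positivity)]
  ring_nf

lemma IsAffineWord.cons_true {a b : ℝ} (hb : 0 < b) {w : List Bool} {l c : ℝ}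
    (h : IsAffineWord a b w l c) : IsAffineWord a b (true :: w) (l * b) (l + c) := by
  obtain ⟨hl, hc, h⟩ := h
  refine ⟨by positivity, by positivity, fun r hr => ?_⟩
  have : Tmap a b true (ENNReal.ofReal r) = ENNReal.ofReal (b * r + 1) := by
    simp [Tmap, ENNReal.ofReal_mul hb.le, ENNReal.ofReal_add (mul_nonneg hb.le hr) zero_le_one]
  rw [List.foldl_cons, this, h _ (by positivity)]
  ring_nf

lemma IsAffineWord.exists_mul_pow {a b : ℝ} (ha : 0 < a) {w : List Bool} {l c : ℝ}
    (h : IsAffineWord a b w l c) (m : ℕ) : ∃ w', IsAffineWord a b w' (l * a ^ m) c := by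
  induction m with
  | zero => exact ⟨w, by simpa using h⟩
  | succ m ih =>
    obtain ⟨w', h'⟩ := ih
    exact ⟨_, by simpa [pow_succ, mul_assoc] using h'.cons_false ha⟩

/-- A backward orbit under `T₀` started in `(0, M]` reaches `[1, M]`, provided `1 / a ≤ M`. -/
lemma exists_div_pow_mem {a M y : ℝ} (ha : 0 < a) (ha1 : a < 1) (hM : 1 / a ≤ M)
    (hy : 0 < y) (hyM : y ≤ M) : ∃ m : ℕ, 1 ≤ y / a ^ m ∧ y / a ^ m ≤ M := by
  by_cases h1 : 1 ≤ y
  · exact ⟨0, by simpa using h1, by simpa using hyM⟩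
  · obtain ⟨n, hn1, hn2⟩ := exists_nat_pow_near_of_lt_one hy (not_le.1 h1).le ha ha1
    refine ⟨n + 1, (one_le_div (by positivity)).2 hn1.le, le_trans ?_ hM⟩
    rw [div_le_div_iff₀ (by positivity) ha, pow_succ]
    nlinarith

/-- Density of the orbit of `0`: its points are the constant terms `c` of the words. -/
lemma exists_const_near {a b : ℝ} (ha : 0 < a) (ha1 : a < 1) (hb : 1 < b) {t ε : ℝ}
    (ht : 0 ≤ t) (hε : 0 < ε) : ∃ w l c, IsAffineWord a b w l c ∧ |c - t| < ε := by
  by_contra! H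
  have hb0 : 0 < b := by linarith
  set M := max t (1 / a) with hMdef
  have hM : 1 / a ≤ M := le_max_right _ _
  have hM0 : 0 < M := lt_of_lt_of_le (by positivity) hM
  -- If no constant term is `ε`-close to `t`, all slopes along the backward orbit are at least
  -- `ε / M`, so that every backward application of `T₁` increases `c` by at least `ε / M / b`.
  have slope : ∀ w l c y, IsAffineWord a b w l c → 0 ≤ y → y ≤ M → l * y + c = t →
      ε ≤ l * y ∧ ε / M ≤ l := by
    intro w l c y hw hy hyM he
    have h1 := H w l c hw
    have h2 : 0 ≤ l * y := mul_nonneg hw.1 hy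
    rw [abs_of_nonpos (by linarith)] at h1
    have h3 : ε ≤ l * y := by linarith
    refine ⟨h3, (div_le_iff₀ hM0).2 (h3.trans ?_)⟩
    exact mul_le_mul_of_nonneg_left hyM hw.1
  have key : ∀ k : ℕ, ∃ w l c y, IsAffineWord a b w l c ∧ 0 ≤ y ∧ y ≤ M ∧ l * y + c = t ∧
      k * (ε / M / b) ≤ c := by
    intro k
    induction k with
    | zero => exact ⟨[], 1, 0, t, isAffineWord_nil a b, ht, le_max_left _ _, by ring, by simp⟩
    | succ k ih =>
      obtain ⟨w, l, c, y, hw, hy, hyM, he, hc⟩ := ih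
      have hy0 : 0 < y := by
        rcases hy.eq_or_lt with h | h
        · have := (slope w l c y hw hy hyM he).1
          rw [← h] at this
          linarith
        · exact h
      obtain ⟨m, hm1, hm2⟩ := exists_div_pow_mem ha ha1 hM hy0 hyM
      obtain ⟨w', hw'⟩ := hw.exists_mul_pow ha m
      have hw2 := hw'.cons_true hb0
      have hq : 0 ≤ (y / a ^ m - 1) / b := div_nonneg (by linarith) hb0.le
      have hqM : (y / a ^ m - 1) / b ≤ M := by
        rw [div_le_iff₀ hb0]
        nlinarith
      have he2 : l * a ^ m * b * ((y / a ^ m - 1) / b) + (l * a ^ m + c) = t := by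
        rw [← he]
        have : a ^ m ≠ 0 := by positivity
        field_simp
        ring
      refine ⟨_, _, _, _, hw2, hq, hqM, he2, ?_⟩
      have h4 := (slope _ _ _ _ hw2 hq hqM he2).2
      have h5 : ε / M / b ≤ l * a ^ m := (div_le_iff₀ hb0).2 h4
      push_cast
      linarith
  have hδ : 0 < ε / M / b := by positivity
  obtain ⟨k, hk⟩ := exists_nat_gt (t / (ε / M / b))
  rw [div_lt_iff₀ hδ] at hk
  obtain ⟨w, l, c, y, hw, hy, -, he, hc⟩ := key k
  have := mul_nonneg hw.1 hy
  linarith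

lemma exists_const_ge {a b : ℝ} (hb : 1 < b) (k : ℕ) :
    ∃ w l c, IsAffineWord a b w l c ∧ 1 ≤ l ∧ (k : ℝ) ≤ c := by
  induction k with
  | zero => exact ⟨[], 1, 0, isAffineWord_nil a b, le_rfl, by simp⟩
  | succ k ih =>
    obtain ⟨w, l, c, hw, hl, hc⟩ := ih
    refine ⟨_, _, _, hw.cons_true (by linarith), by nlinarith, ?_⟩
    push_cast
    linarith

/-- Some word maps the whole interval `[0, N]` into a prescribed neighbourhood of `t`, finite or not. -/
lemma exists_word_mem {a b : ℝ} (ha : 0 < a) (ha1 : a < 1) (hb : 1 < b) (t : ℝ≥0∞)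
    {U : Set ℝ≥0∞} (hU : U ∈ nhds t) (N : ℕ) :
    ∃ w : List Bool, ∀ r : ℝ, 0 ≤ r → r ≤ N →
      w.foldl (fun z j => Tmap a b j z) (ENNReal.ofReal r) ∈ U := by
  by_cases ht : t = ⊤
  · subst ht
    obtain ⟨s, hs, hsU⟩ := ENNReal.nhds_top_basis.mem_iff.1 hU
    obtain ⟨k, hk⟩ := exists_nat_gt s.toReal
    obtain ⟨w, l, c, hw, hl, hc⟩ := exists_const_ge (a := a) hb k
    refine ⟨w, fun r hr _ => hsU ?_⟩
    rw [hw.2.2 r hr, Set.mem_Ioi, ENNReal.lt_ofReal_iff_toReal_lt hs.ne]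
    have := mul_nonneg hw.1 hr
    linarith
  · have hcont : Tendsto ENNReal.ofReal (nhds t.toReal) (nhds t) := by
      simpa [ENNReal.ofReal_toReal ht] using
        (ENNReal.continuous_ofReal.tendsto t.toReal)
    obtain ⟨ε, hε, hball⟩ := Metric.mem_nhds_iff.1 (hcont hU)
    obtain ⟨w, l, c, hw, hc⟩ := exists_const_near ha ha1 hb (t := t.toReal)
      ENNReal.toReal_nonneg (half_pos hε)
    have hlim : Tendsto (fun m : ℕ => l * a ^ m * N) atTop (nhds 0) := by
      simpa using ((tendsto_pow_atTop_nhds_zero_of_lt_one ha.le ha1).const_mul l).mul_const (N : ℝ)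
    obtain ⟨m, hm⟩ := (hlim.eventually (gt_mem_nhds (half_pos hε))).exists
    obtain ⟨w', hw'⟩ := hw.exists_mul_pow ha m
    refine ⟨w', fun r hr hrN => ?_⟩
    rw [hw'.2.2 r hr]
    apply hball
    have h1 : l * a ^ m * r ≤ l * a ^ m * N := mul_le_mul_of_nonneg_left hrN hw'.1
    have h2 : 0 ≤ l * a ^ m * r := mul_nonneg hw'.1 hr
    rw [Metric.mem_ball, Real.dist_eq, abs_lt]
    rw [abs_lt] at hc
    constructor <;> linarith [hc.1, hc.2]

/-- Every probability measure on `[0, ∞]` is a weak limit of the empirical measures of a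
sequence of points: a typical sequence of independent samples has this property. -/
lemma exists_equidistributed (μ : Measure ℝ≥0∞) [IsProbabilityMeasure μ] :
    ∃ t : ℕ → ℝ≥0∞, ∀ f : ℝ≥0∞ → ℝ, Continuous f →
      Tendsto (fun n : ℕ => (∑ i ∈ Finset.range n, f (t i)) / n) atTop
        (nhds (∫ y, f y ∂μ)) := by
  let P : Measure (ℕ → ℝ≥0∞) := Measure.infinitePi fun _ => μ
  have hint : ∀ φ : C(ℝ≥0∞, ℝ), Integrable φ μ := fun φ =>
    Integrable.of_bound φ.continuous.aestronglyMeasurable ‖φ‖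
      (ae_of_all _ fun x => φ.norm_coe_le_norm x)
  have slln : ∀ φ : C(ℝ≥0∞, ℝ), ∀ᵐ ω ∂P,
      Tendsto (fun n : ℕ => (∑ i ∈ Finset.range n, φ (ω i)) / n) atTop
        (nhds (∫ y, φ y ∂μ)) := by
    intro φ
    have mp : ∀ i : ℕ, MeasurePreserving (fun ω : ℕ → ℝ≥0∞ => ω i) P μ := fun i =>
      measurePreserving_eval_infinitePi (fun _ => μ) i
    have hφ : Measurable φ := φ.continuous.measurable
    have := ProbabilityTheory.strong_law_ae_real (μ := P) (fun i ω => φ (ω i))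
      ((mp 0).integrable_comp_of_integrable (hint φ))
      (fun i j hij => (ProbabilityTheory.iIndepFun_infinitePi (P := fun _ : ℕ => μ)
        (X := fun _ => φ) (fun _ => hφ)).indepFun hij)
      (fun i => by
        refine ⟨(hφ.comp (mp i).measurable).aemeasurable,
          (hφ.comp (mp 0).measurable).aemeasurable, ?_⟩
        have h : ∀ j : ℕ, P.map (fun ω => φ (ω j)) = μ.map φ := fun j => by
          rw [← (mp j).map_eq, Measure.map_map hφ (mp j).measurable]
          rfl
        rw [h i, h 0])
    have he : ∫ ω, φ (ω 0) ∂P = ∫ y, φ y ∂μ := by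
      rw [← (mp 0).map_eq, integral_map (mp 0).measurable.aemeasurable
        φ.continuous.aestronglyMeasurable]
    rwa [he] at this
  have hall : ∀ᵐ ω ∂P, ∀ k : ℕ,
      Tendsto (fun n : ℕ => (∑ i ∈ Finset.range n,
          TopologicalSpace.denseSeq C(ℝ≥0∞, ℝ) k (ω i)) / n) atTop
        (nhds (∫ y, TopologicalSpace.denseSeq C(ℝ≥0∞, ℝ) k y ∂μ)) :=
    ae_all_iff.2 fun k => slln _
  obtain ⟨t, ht⟩ := hall.exists
  refine ⟨t, fun f hf => ?_⟩
  -- Pass from the dense sequence to `f`: both sides move by at most `‖F - φ‖`.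
  let F : C(ℝ≥0∞, ℝ) := ⟨f, hf⟩
  change Tendsto (fun n : ℕ => (∑ i ∈ Finset.range n, F (t i)) / n) atTop (nhds (∫ y, F y ∂μ))
  rw [Metric.tendsto_atTop]
  intro ε hε
  obtain ⟨k, hk⟩ := (TopologicalSpace.denseRange_denseSeq C(ℝ≥0∞, ℝ)).exists_dist_lt F
    (show 0 < ε / 3 by positivity)
  set φ := TopologicalSpace.denseSeq C(ℝ≥0∞, ℝ) k
  obtain ⟨N, hN⟩ := Metric.tendsto_atTop.1 (ht k) (ε / 3) (by positivity)
  have hpt : ∀ x, |F x - φ x| ≤ ε / 3 := fun x => by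
    rw [← Real.dist_eq]
    exact (ContinuousMap.dist_apply_le_dist x).trans hk.le
  have hI : |∫ y, F y ∂μ - ∫ y, φ y ∂μ| ≤ ε / 3 := by
    rw [← integral_sub (hint F) (hint φ), ← Real.norm_eq_abs]
    simpa using norm_integral_le_of_norm_le_const (μ := μ) (f := fun y => F y - φ y)
      (ae_of_all μ hpt)
  refine ⟨N, fun n hn => ?_⟩
  have hS : |(∑ i ∈ Finset.range n, F (t i)) / n - (∑ i ∈ Finset.range n, φ (t i)) / n|
      ≤ ε / 3 := by
    rw [← sub_div, ← Finset.sum_sub_distrib, abs_div, Nat.abs_cast]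
    refine div_le_of_le_mul₀ (by positivity) (by positivity) ?_
    refine (Finset.abs_sum_le_sum_abs _ _).trans ((Finset.sum_le_sum fun i _ => hpt (t i)).trans ?_)
    simp [mul_comm]
  have h3 := hN n hn
  rw [Real.dist_eq] at h3 ⊢
  rw [abs_lt] at h3 ⊢
  rw [abs_le] at hS hI
  constructor <;> linarith [hS.1, hS.2, hI.1, hI.2, h3.1, h3.2]

/-- Perfect squares have density zero, so a bounded sequence supported on them has vanishing
Cesàro means. -/
lemma tendsto_cesaro_of_isSquare {v : ℕ → ℝ} {C : ℝ} (hv : ∀ i, |v i| ≤ C)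
    (hsq : ∀ i, ¬ IsSquare i → v i = 0) :
    Tendsto (fun n : ℕ => (n⁻¹ : ℝ) * ∑ i ∈ Finset.range n, v i) atTop (nhds 0) := by
  have hC : 0 ≤ C := (abs_nonneg _).trans (hv 0)
  have hsum : ∀ n : ℕ, |∑ i ∈ Finset.range n, v i| ≤ (Real.sqrt n + 1) * C := by
    intro n
    let S := (Finset.range (Nat.sqrt n + 1)).image fun j => j * j
    have hsub : ∑ i ∈ Finset.range n, |v i| ≤ ∑ i ∈ S, |v i| := by
      rw [← Finset.sum_filter_ne_zero]
      refine Finset.sum_le_sum_of_subset_of_nonneg (fun i hi => ?_) fun i _ _ => abs_nonneg _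
      obtain ⟨hi, hne⟩ := Finset.mem_filter.1 hi
      have : IsSquare i := by
        by_contra h
        exact hne (by simp [hsq i h])
      obtain ⟨j, rfl⟩ := this
      refine Finset.mem_image.2 ⟨j, ?_, rfl⟩
      have := Finset.mem_range.1 hi
      exact Finset.mem_range.2 (Nat.lt_succ_of_le (Nat.le_sqrt.2 this.le))
    have hcard : (S.card : ℝ) ≤ Real.sqrt n + 1 := by
      have h1 : S.card ≤ Nat.sqrt n + 1 := by
        simpa using Finset.card_image_le (s := Finset.range (Nat.sqrt n + 1)) (f := fun j => j * j)
      have h2 : (S.card : ℝ) ≤ (Nat.sqrt n : ℝ) + 1 := by exact_mod_cast h1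
      linarith [Real.nat_sqrt_le_real_sqrt (a := n)]
    calc |∑ i ∈ Finset.range n, v i| ≤ ∑ i ∈ Finset.range n, |v i| :=
          Finset.abs_sum_le_sum_abs _ _
      _ ≤ ∑ i ∈ S, |v i| := hsub
      _ ≤ S.card * C := by
          simpa using Finset.sum_le_card_nsmul S (fun i => |v i|) C fun i _ => hv i
      _ ≤ _ := mul_le_mul_of_nonneg_right hcard hC
  have hlim : Tendsto (fun n : ℕ => ((Real.sqrt n)⁻¹ + (n : ℝ)⁻¹) * C) atTop (nhds 0) := by
    have h1 : Tendsto (fun n : ℕ => (Real.sqrt n)⁻¹) atTop (nhds 0) :=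
      tendsto_inv_atTop_zero.comp (Real.tendsto_sqrt_atTop.comp tendsto_natCast_atTop_atTop)
    simpa using (h1.add (tendsto_inv_atTop_nhds_zero_nat (𝕜 := ℝ))).mul_const C
  refine squeeze_zero_norm (fun n => ?_) hlim
  rw [norm_mul, norm_inv, Real.norm_natCast, Real.norm_eq_abs]
  have hsq : (n : ℝ)⁻¹ * Real.sqrt n = (Real.sqrt n)⁻¹ := by
    rw [inv_mul_eq_div, Real.sqrt_div_self', one_div]
  calc (n : ℝ)⁻¹ * |∑ i ∈ Finset.range n, v i|
      ≤ (n : ℝ)⁻¹ * ((Real.sqrt n + 1) * C) :=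
        mul_le_mul_of_nonneg_left (hsum n) (by positivity)
    _ = ((n : ℝ)⁻¹ * Real.sqrt n + (n : ℝ)⁻¹) * C := by ring
    _ = _ := by rw [hsq]

/-- **Theorem C.** For any Borel probability measure `μ` on `ℝ̄₊ = [0,∞]` there is a
sequence `(g_i)` of elements of the free semigroup `G` (which exhausts `G`) such that
for every `x ∈ ℝ₊` and every continuous `f : ℝ̄₊ → ℝ`,
`(1/n)·Σ_{i=1}^n f(T_{g_i}(x)) → ∫ f dμ`. -/
theorem thmC (a b : ℝ) (ha : 0 < a) (ha1 : a < 1) (hb : 1 < b)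
    (μ : Measure ℝ≥0∞) [IsProbabilityMeasure μ] :
    ∃ g : ℕ → List Bool,
      (∀ ω : List Bool, ∃ i : ℕ, g i = ω) ∧
      ∀ x : ℝ≥0∞, x ≠ ⊤ → ∀ f : ℝ≥0∞ → ℝ, Continuous f →
        Tendsto (fun n : ℕ => (1 / (n : ℝ)) * ∑ i ∈ Finset.range n,
            f ((g i).foldl (fun z j => Tmap a b j z) x))
          atTop (nhds (∫ y, f y ∂μ)) := by
  classical
  obtain ⟨t, ht⟩ := exists_equidistributed μ
  obtain ⟨e, he⟩ := exists_surjective_nat (List Bool)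
  -- The homeomorphism with `[0, 1]` supplies a metric on the compactification.
  let Φ : ℝ≥0∞ ≃ₜ Set.Icc (0 : ℝ) 1 := ENNReal.orderIsoUnitIntervalBirational.toHomeomorph
  have hw : ∀ i : ℕ, ∃ w : List Bool, ∀ r : ℝ, 0 ≤ r → r ≤ i →
      dist (Φ (w.foldl (fun z j => Tmap a b j z) (ENNReal.ofReal r))) (Φ (t i))
        < 1 / ((i : ℝ) + 1) := fun i =>
    exists_word_mem ha ha1 hb (t i)
      (U := {y | dist (Φ y) (Φ (t i)) < 1 / ((i : ℝ) + 1)})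
      (Φ.continuous.continuousAt (Metric.ball_mem_nhds _ (by positivity))) i
  choose w hw using hw
  refine ⟨fun i => if IsSquare i then e (Nat.sqrt i) else w i, fun ω => ?_, ?_⟩
  · obtain ⟨k, rfl⟩ := he ω
    exact ⟨k * k, by simp [Nat.sqrt_eq]⟩
  intro x hx f hf
  set g : ℕ → List Bool := fun i => if IsSquare i then e (Nat.sqrt i) else w i with hg
  set h : ℕ → ℝ := fun i => f ((g i).foldl (fun z j => Tmap a b j z) x) - f (t i) with hh
  obtain ⟨C, hC⟩ : ∃ C, ∀ y, |f y| ≤ C :=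
    ⟨_, fun y => ContinuousMap.norm_coe_le_norm (⟨f, hf⟩ : C(ℝ≥0∞, ℝ)) y⟩
  have hbd : ∀ i, |h i| ≤ C + C := fun i =>
    (abs_sub _ _).trans (add_le_add (hC _) (hC _))
  have hsquare : Tendsto (fun n : ℕ => (n⁻¹ : ℝ) * ∑ i ∈ Finset.range n,
      if IsSquare i then h i else 0) atTop (nhds 0) := by
    refine tendsto_cesaro_of_isSquare (C := C + C) (fun i => ?_) (fun i hi => by simp [hi])
    split_ifs
    · exact hbd i
    · simpa using (abs_nonneg _).trans (hbd i)
  have hnon : Tendsto (fun i : ℕ => if IsSquare i then 0 else h i) atTop (nhds 0) := by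
    have huc : UniformContinuous (f ∘ Φ.symm) :=
      CompactSpace.uniformContinuous_of_continuous (hf.comp Φ.symm.continuous)
    rw [Metric.tendsto_atTop]
    intro ε hε
    obtain ⟨δ, hδ, hfδ⟩ := Metric.uniformContinuous_iff.1 huc ε hε
    obtain ⟨N₁, hN₁⟩ := exists_nat_ge x.toReal
    obtain ⟨N₂, hN₂⟩ := exists_nat_one_div_lt hδ
    refine ⟨max N₁ N₂, fun i hi => ?_⟩
    by_cases hs : IsSquare i
    · simpa [hs] using hε
    · have h1 : x.toReal ≤ i := hN₁.trans (by exact_mod_cast (le_max_left _ _).trans hi)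
      have h2 : 1 / ((i : ℝ) + 1) ≤ 1 / ((N₂ : ℝ) + 1) :=
        Nat.one_div_le_one_div ((le_max_right _ _).trans hi)
      have h3 := hw i x.toReal ENNReal.toReal_nonneg h1
      rw [ENNReal.ofReal_toReal hx] at h3
      have h4 := hfδ (h3.trans (h2.trans_lt hN₂))
      simpa [hs, hh, hg, Real.dist_eq] using h4
  have hlim := ((ht f hf).add hnon.cesaro).add hsquare
  rw [add_zero, add_zero] at hlim
  refine hlim.congr fun n => ?_
  rw [div_eq_inv_mul, ← mul_add, ← mul_add, ← Finset.sum_add_distrib, ← Finset.sum_add_distrib,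
    one_div]
  congr 1
  refine Finset.sum_congr rfl fun i _ => ?_
  by_cases hs : IsSquare i <;> simp [hs, hh]
end

section
/- Assume additionally that a·b < 1. Then there exists a Borel probability measure μ on ℝ̄₊ with μ({∞}) = 0 such that for every continuous function f : ℝ̄₊ → ℝ and every x ∈ ℝ₊, (1/2ⁿ)·Σ_{ω ∈ Σ_n} f(T_ω(x)) → ∫ f dμ as n → ∞, where Σ_n denotes the set of all 0-1 words of length n. -/
/-!
Reading a word backwards is a bijection of the words of length `n`, so the average in question is
the expectation of `f` at the *backward* composition `T_{ω₀} ∘ ⋯ ∘ T_{ω_{n-1}} (x)`, where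
`ω₀, ω₁, …` are independent fair coin tosses. Writing `T_j(x) = c_j x + e_j` and
`P_n = c_{ω₀} ⋯ c_{ω_{n-1}}`, this composition equals `∑_{k<n} P_k e_{ω_k} + P_n x`
(`foldr_Tmap`).

Since `ab < 1`, the function `s ↦ a^s + b^s` has negative derivative at `0`, hence
`ρ = (a^s + b^s) / 2 < 1` for some `s ∈ (0, 1)` (`exists_exponent`). By independence
`𝔼[P_n^s] = ρ^n` is summable, so almost surely `∑ P_n^s < ∞`, and subadditivity of `t ↦ t^s` gives
`∑ P_n < ∞` (`ae_tsum_partialProd_ne_top`). Therefore the backward compositions converge almost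
surely to the finite random variable `Z = ∑ P_k e_{ω_k}`, whatever the starting point `x`. The
measure `μ` is the law of `Z`, and the convergence of expectations is dominated convergence, `f`
being bounded on the compact space `[0, ∞]`.
-/

open MeasureTheory Filter
open scoped ENNReal

/-- The law of a fair coin. -/
noncomputable def coin : Measure Bool := (PMF.uniformOfFintype Bool).toMeasure

instance : IsProbabilityMeasure coin := by unfold coin; infer_instance

/-- The law of an infinite sequence of independent fair coin tosses. -/
noncomputable def coinSeq : Measure (ℕ → Bool) := Measure.infinitePi fun _ => coin

instance : IsProbabilityMeasure coinSeq := by unfold coinSeq; infer_instance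

/-- The slope of `T_j`. -/
noncomputable def branchSlope (a b : ℝ) (j : Bool) : ℝ≥0∞ := ENNReal.ofReal (if j then b else a)

/-- The product `P_n` of the slopes of the first `n` maps. -/
noncomputable def partialProd (a b : ℝ) (ω : ℕ → Bool) (n : ℕ) : ℝ≥0∞ :=
  ∏ k ∈ Finset.range n, branchSlope a b (ω k)

/-- The `k`-th term `P_k e_{ω_k}` of the series for `Z`, where `e_j = T_j(0)`. -/
noncomputable def seriesTerm (a b : ℝ) (ω : ℕ → Bool) (k : ℕ) : ℝ≥0∞ :=
  partialProd a b ω k * (if ω k then 1 else 0)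

lemma coin_singleton (j : Bool) : coin {j} = 2⁻¹ := by
  simp [coin]

lemma coinSeq_map (n : ℕ) :
    coinSeq.map (fun ω (i : Fin n) => ω i) = Measure.pi fun _ : Fin n => coin := by
  symm
  apply Measure.pi_eq
  intro s hs
  rw [Measure.map_apply (by fun_prop) (MeasurableSet.univ_pi hs)]
  have : (fun (ω : ℕ → Bool) (i : Fin n) => ω i) ⁻¹' (Set.univ.pi s) =
      Set.pi (Finset.range n) (fun k => if h : k < n then s ⟨k, h⟩ else Set.univ) := by
    ext ω
    simp only [Set.mem_preimage, Set.mem_pi, Finset.coe_range, Set.mem_Iio]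
    constructor
    · intro h k hk
      simpa [hk] using h ⟨k, hk⟩
    · intro h i
      simpa using h i i.2
  rw [this, coinSeq, Measure.infinitePi_pi _ (fun _ _ => MeasurableSet.of_discrete),
    Finset.prod_range]
  simp

lemma pi_coin_singleton {n : ℕ} (w : Fin n → Bool) :
    (Measure.pi fun _ : Fin n => coin) {w} = (2⁻¹) ^ n := by
  simp [coin_singleton]

lemma integral_coinSeq (n : ℕ) (g : (Fin n → Bool) → ℝ) :
    ∫ ω, g (fun i => ω i) ∂coinSeq = (1 / (2 : ℝ) ^ n) * ∑ w, g w := by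
  have h := integral_map (μ := coinSeq) (φ := fun ω (i : Fin n) => ω i) (f := g)
    (by fun_prop : Measurable fun (ω : ℕ → Bool) (i : Fin n) => ω i).aemeasurable
    Measurable.of_discrete.aestronglyMeasurable
  rw [← h, coinSeq_map, integral_fintype .of_finite, Finset.mul_sum]
  refine Finset.sum_congr rfl fun w _ => ?_
  rw [measureReal_def, pi_coin_singleton]
  simp

lemma lintegral_coinSeq (n : ℕ) (g : (Fin n → Bool) → ℝ≥0∞) :
    ∫⁻ ω, g (fun i => ω i) ∂coinSeq = ∑ w, g w * 2⁻¹ ^ n := by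
  have h := lintegral_map (μ := coinSeq) (g := fun ω (i : Fin n) => ω i) (f := g)
    Measurable.of_discrete (by fun_prop)
  rw [← h, coinSeq_map, lintegral_fintype]
  exact Finset.sum_congr rfl fun w _ => by rw [pi_coin_singleton]

lemma Tmap_eq (a b : ℝ) (j : Bool) (x : ℝ≥0∞) :
    Tmap a b j x = branchSlope a b j * x + if j then 1 else 0 := by
  cases j <;> simp [Tmap, branchSlope]

/-- The backward composition of the first `n` maps, as a partial sum plus a remainder. -/
lemma foldr_Tmap (a b : ℝ) (ω : ℕ → Bool) (n : ℕ) (x : ℝ≥0∞) :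
    (List.ofFn fun i : Fin n => ω i).foldr (Tmap a b) x =
      ∑ k ∈ Finset.range n, seriesTerm a b ω k + partialProd a b ω n * x := by
  induction n generalizing x with
  | zero => simp [partialProd]
  | succ n ih =>
    rw [List.ofFn_succ_last, List.foldr_append]
    simp only [Fin.val_castSucc, Fin.val_last, List.foldr_cons, List.foldr_nil]
    rw [ih, Tmap_eq, Finset.sum_range_succ, seriesTerm, partialProd, partialProd,
      Finset.prod_range_succ]
    ring

/-- The average over all words does not see the order in which a word is read. -/
lemma sum_foldl_eq_sum_foldr (a b : ℝ) (n : ℕ) (f : ℝ≥0∞ → ℝ) (x : ℝ≥0∞) :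
    ∑ w : Fin n → Bool, f ((List.ofFn w).foldl (fun z j => Tmap a b j z) x) =
      ∑ w : Fin n → Bool, f ((List.ofFn w).foldr (Tmap a b) x) := by
  refine Fintype.sum_equiv (Equiv.arrowCongr Fin.revPerm (Equiv.refl Bool)) _ _ fun w => ?_
  rw [List.foldl_eq_foldr_reverse]
  congr 2
  apply List.ext_getElem
  · simp
  · intro i h1 h2
    simp only [List.getElem_reverse, List.getElem_ofFn, List.length_ofFn]
    simp only [Equiv.arrowCongr_apply, Function.comp, Equiv.refl_apply, Fin.revPerm_symm,
      Fin.revPerm_apply]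
    congr 1
    ext
    simp [Fin.rev]
    omega

lemma exists_exponent (a b : ℝ) (ha : 0 < a) (hb : 1 < b) (hab : a * b < 1) :
    ∃ s : ℝ, 0 < s ∧ s < 1 ∧ a ^ s + b ^ s < 2 := by
  have hb0 : 0 < b := by linarith
  have hd : HasDerivAt (fun s : ℝ => a ^ s + b ^ s) (Real.log (a * b)) 0 := by
    have h1 := (Real.hasStrictDerivAt_const_rpow ha 0).hasDerivAt
    have h2 := (Real.hasStrictDerivAt_const_rpow hb0 0).hasDerivAt
    have := h1.add h2
    simp only [Real.rpow_zero, one_mul] at this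
    rwa [← Real.log_mul ha.ne' hb0.ne'] at this
  have hneg : Real.log (a * b) < 0 := Real.log_neg (by positivity) hab
  have h1 := (hasDerivAt_iff_tendsto_slope.1 hd).eventually (gt_mem_nhds hneg)
  have h2 : ∀ᶠ s in nhdsWithin (0 : ℝ) (Set.Ioi 0),
      slope (fun s : ℝ => a ^ s + b ^ s) 0 s < 0 :=
    h1.filter_mono (nhdsWithin_mono _ fun s hs => ne_of_gt hs)
  obtain ⟨s, hs, hs'⟩ := (h2.and (Ioo_mem_nhdsGT (zero_lt_one' ℝ))).exists
  refine ⟨s, hs'.1, hs'.2, ?_⟩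
  rw [slope_def_field] at hs
  have := (div_neg_iff.1 hs).resolve_left (fun h => by linarith [h.2, hs'.1])
  simp at this
  linarith [this.1]

/-- `𝔼[P_n^s] = ((a^s + b^s) / 2)^n`, by independence. -/
lemma lintegral_partialProd (a b s : ℝ) (hs : 0 < s) (n : ℕ) :
    ∫⁻ ω, partialProd a b ω n ^ s ∂coinSeq =
      ((branchSlope a b true ^ s + branchSlope a b false ^ s) * 2⁻¹) ^ n := by
  have h := lintegral_coinSeq n (fun w => ∏ i, branchSlope a b (w i) ^ s)
  have h' : ∀ ω : ℕ → Bool, partialProd a b ω n ^ s = ∏ i : Fin n, branchSlope a b (ω i) ^ s := by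
    intro ω
    rw [partialProd, Finset.prod_range, ENNReal.prod_rpow_of_nonneg hs.le]
  simp only [h', h]
  rw [← Finset.sum_mul, ← Fintype.sum_pow (fun j => branchSlope a b j ^ s), Fintype.sum_bool, mul_pow]

lemma measurable_partialProd (a b : ℝ) (n : ℕ) :
    Measurable fun ω : ℕ → Bool => partialProd a b ω n := by
  unfold partialProd
  refine Finset.measurable_prod _ fun k _ => ?_
  exact (Measurable.of_discrete (f := branchSlope a b)).comp (measurable_pi_apply k)

lemma measurable_seriesTerm (a b : ℝ) (n : ℕ) :
    Measurable fun ω : ℕ → Bool => seriesTerm a b ω n := by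
  unfold seriesTerm
  refine (measurable_partialProd a b n).mul ?_
  exact (Measurable.of_discrete (f := fun j : Bool => if j then (1 : ℝ≥0∞) else 0)).comp
    (measurable_pi_apply n)

lemma sum_rpow_le (s : ℝ) (hs : 0 < s) (hs1 : s ≤ 1) (g : ℕ → ℝ≥0∞) (n : ℕ) :
    (∑ k ∈ Finset.range n, g k) ^ s ≤ ∑ k ∈ Finset.range n, g k ^ s := by
  induction n with
  | zero => simp [hs]
  | succ n ih =>
    rw [Finset.sum_range_succ, Finset.sum_range_succ]
    exact (ENNReal.rpow_add_le_add_rpow _ _ hs.le hs1).trans (by gcongr)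

lemma tsum_ne_top_of_tsum_rpow (s : ℝ) (hs : 0 < s) (hs1 : s ≤ 1) (g : ℕ → ℝ≥0∞)
    (h : ∑' k, g k ^ s ≠ ⊤) : ∑' k, g k ≠ ⊤ := by
  have hle : ∑' k, g k ≤ (∑' k, g k ^ s) ^ s⁻¹ := by
    rw [ENNReal.tsum_eq_iSup_nat]
    refine iSup_le fun n => ?_
    rw [ENNReal.le_rpow_inv_iff hs]
    exact (sum_rpow_le s hs hs1 g n).trans (ENNReal.sum_le_tsum _)
  exact ne_top_of_le_ne_top (ENNReal.rpow_ne_top_of_nonneg (by positivity) h) hle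

lemma ae_tsum_partialProd_ne_top (a b : ℝ) (ha : 0 < a) (hb : 1 < b) (hab : a * b < 1) :
    ∀ᵐ ω ∂coinSeq, ∑' k, partialProd a b ω k ≠ ⊤ := by
  obtain ⟨s, hs, hs1, hlt⟩ := exists_exponent a b ha hb hab
  have hb0 : 0 < b := by linarith
  have hρ : (branchSlope a b true ^ s + branchSlope a b false ^ s) * 2⁻¹ < 1 := by
    rw [← div_eq_mul_inv]
    apply ENNReal.div_lt_of_lt_mul
    simp only [branchSlope, if_true, Bool.false_eq_true, if_false]
    rw [ENNReal.ofReal_rpow_of_pos hb0, ENNReal.ofReal_rpow_of_pos ha,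
      ← ENNReal.ofReal_add (by positivity) (by positivity), one_mul,
      ENNReal.ofReal_lt_iff_lt_toReal (by positivity) (by simp)]
    simpa [add_comm] using hlt
  have hm : ∀ k, Measurable fun ω => partialProd a b ω k ^ s :=
    fun k => (measurable_partialProd a b k).pow_const s
  have hfin : ∫⁻ ω, ∑' k, partialProd a b ω k ^ s ∂coinSeq ≠ ⊤ := by
    rw [lintegral_tsum fun k => (hm k).aemeasurable]
    simp only [lintegral_partialProd a b s hs]
    rw [ENNReal.tsum_geometric]
    exact ENNReal.inv_ne_top.2 (tsub_pos_of_lt hρ).ne'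
  filter_upwards [ae_lt_top (Measurable.tsum hm) hfin] with ω hω
  exact tsum_ne_top_of_tsum_rpow s hs hs1.le _ hω.ne

/-- Almost surely, the backward compositions converge to `Z`, from every finite starting point. -/
lemma tendsto_backward (a b : ℝ) (ω : ℕ → Bool) (hω : ∑' k, partialProd a b ω k ≠ ⊤)
    (x : ℝ≥0∞) (hx : x ≠ ⊤) :
    Tendsto (fun n => (List.ofFn fun i : Fin n => ω i).foldr (Tmap a b) x) atTop
      (nhds (∑' k, seriesTerm a b ω k)) := by
  simp only [foldr_Tmap]
  have h1 := ENNReal.tendsto_nat_tsum (seriesTerm a b ω)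
  have h2 := ENNReal.Tendsto.mul_const (b := x)
    (ENNReal.tendsto_atTop_zero_of_tsum_ne_top hω) (Or.inr hx)
  simpa using h1.add h2

/-- **Theorem D.** Assume `0 < a < 1 < b` and `a·b < 1`. Then there is a Borel
probability measure `μ` on `ℝ̄₊` with `μ({∞}) = 0` such that for every continuous
`f : ℝ̄₊ → ℝ` and every `x ∈ ℝ₊`,
`(1/2ⁿ)·Σ_{ω ∈ Σ_n} f(T_ω(x)) → ∫ f dμ`, where `Σ_n` is the set of 0-1 words of
length `n` (here modelled by functions `Fin n → Bool`). -/
theorem thmD (a b : ℝ) (ha : 0 < a) (ha1 : a < 1) (hb : 1 < b) (hab : a * b < 1) :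
    ∃ μ : Measure ℝ≥0∞, IsProbabilityMeasure μ ∧ μ {⊤} = 0 ∧
      ∀ f : ℝ≥0∞ → ℝ, Continuous f → ∀ x : ℝ≥0∞, x ≠ ⊤ →
        Tendsto (fun n : ℕ => (1 / (2 : ℝ) ^ n) * ∑ ω : Fin n → Bool,
            f ((List.ofFn ω).foldl (fun z j => Tmap a b j z) x))
          atTop (nhds (∫ y, f y ∂μ)) := by
  have hZ : Measurable fun ω : ℕ → Bool => ∑' k, seriesTerm a b ω k :=
    Measurable.tsum (measurable_seriesTerm a b)
  have hae := ae_tsum_partialProd_ne_top a b ha hb hab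
  refine ⟨coinSeq.map fun ω => ∑' k, seriesTerm a b ω k,
    Measure.isProbabilityMeasure_map hZ.aemeasurable, ?_, ?_⟩
  · rw [Measure.map_apply hZ (measurableSet_singleton _)]
    refine measure_mono_null ?_ hae
    intro ω hω
    simp only [Set.mem_preimage, Set.mem_singleton_iff] at hω
    simp only [Set.mem_compl_iff, Set.mem_ofPred_eq, not_not]
    refine top_unique (hω ▸ ENNReal.tsum_le_tsum fun k => ?_)
    unfold seriesTerm
    split_ifs <;> simp
  · intro f hf x hx
    rw [integral_map hZ.aemeasurable hf.measurable.aestronglyMeasurable]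
    obtain ⟨C, hC⟩ := isCompact_univ.exists_bound_of_continuousOn hf.continuousOn
    simp only [sum_foldl_eq_sum_foldr]
    simp only [← integral_coinSeq _ fun w => f ((List.ofFn w).foldr (Tmap a b) x)]
    refine tendsto_integral_of_dominated_convergence (fun _ => C) (fun n => ?_)
      (integrable_const C) (fun n => .of_forall fun ω => hC _ (Set.mem_univ _)) ?_
    · exact ((Measurable.of_discrete
        (f := fun w : Fin n → Bool => f ((List.ofFn w).foldr (Tmap a b) x))).comp
        (by fun_prop : Measurable fun (ω : ℕ → Bool) (i : Fin n) => ω i)).aestronglyMeasurable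
    · filter_upwards [hae] with ω hω
      exact (hf.tendsto _).comp (tendsto_backward a b ω hω x hx)
end

section
/- Let ω = (ω₀,…,ω_{n−1}) be a 0-1 word of length n containing exactly m ones. Let x, M ∈ ℝ₊ and assume x ≤ M and that for every k < n one has T_{ω_k} ∘ ⋯ ∘ T_{ω₀}(x) ≤ M. Then 1/(a^{n−m}·b^{m}) ≥ (m−1)·x/(b·M²). -/
/-!
Write `P` for the product of the multipliers along `ω` (so `P = a ^ (n - m) * b ^ m`) and `y` for
the final point of the orbit of `x`. Unrolling the affine maps expresses `y / P` as `x` plus the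
sum of `1 / P'`, where `P'` ranges over the products along the prefixes of `ω` ending in a one.
Each of these satisfies `P' * x ≤ M`, since the orbit point dominates its linear part and is
bounded by `M`. Hence `y / P ≥ m * x / M`, i.e. `P * m * x ≤ y * M ≤ M ^ 2`, which is slightly
stronger than the claim. The lemma `orbit_lower_bounds` proves the two lower bounds on `y` by
induction on the word, appending one letter at a time.
-/

/-- The endpoint of the orbit dominates its linear part `P * x`, and, when the orbit stays below
`M`, every occurrence of the map `T₁` contributes at least `P * x / M` to it. -/
theorem orbit_lower_bounds (a b : ℝ) (ha : 0 < a) (hb : 0 < b) (x M : ℝ) (hx : 0 ≤ x)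
    (hM0 : 0 ≤ M) (ω : List Bool)
    (hM : ∀ k < ω.length,
      ((ω.take (k + 1)).foldl (fun z i => if i then b * z + 1 else a * z) x) ≤ M) :
    a ^ (ω.count false) * b ^ (ω.count true) * x ≤
        ω.foldl (fun z i => if i then b * z + 1 else a * z) x ∧
      a ^ (ω.count false) * b ^ (ω.count true) * (ω.count true * x) ≤
        ω.foldl (fun z i => if i then b * z + 1 else a * z) x * M := by
  induction ω using List.reverseRecOn with
  | nil => simpa using mul_nonneg hx hM0
  | append_singleton l i ih =>
    have hlast := hM l.length (by simp)
    rw [List.take_of_length_le (by simp)] at hlast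
    obtain ⟨h1, h2⟩ := ih fun k hk => by
      have := hM k (by simp; omega)
      rwa [List.take_append_of_le_length (by omega)] at this
    rw [List.foldl_append] at hlast ⊢
    generalize l.foldl (fun z i => if i then b * z + 1 else a * z) x = y at *
    cases i with
    | false =>
      have e1 := mul_le_mul_of_nonneg_left h1 ha.le
      have e2 := mul_le_mul_of_nonneg_left h2 ha.le
      simp [List.count_append, pow_succ] at hlast ⊢
      constructor <;> linarith
    | true =>
      have e1 := mul_le_mul_of_nonneg_left h1 hb.le
      have e2 := mul_le_mul_of_nonneg_left h2 hb.le
      simp [List.count_append, pow_succ] at hlast ⊢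
      -- The new summand `1 * M` dominates the new product times `x`.
      constructor <;> linarith


/-- **Lemma 2.2 (Lemma 3.3 of Misiurewicz–Rodrigues).** Let `T₀(x) = a·x`, `T₁(x) = b·x + 1`
with `0 < a < 1 < b`. Let `ω` be a 0-1 word of length `n` with exactly `m` ones. If `x ≤ M`
and all partial images `T_{ω_k} ∘ ⋯ ∘ T_{ω₀}(x) ≤ M` for `k < n`, then
`1/(a^{n−m}·b^m) ≥ (m−1)·x/(b·M²)`. Here `m = ω.count true` and `n − m = ω.count false`. -/
theorem lemma_MR33 (a b : ℝ) (ha : 0 < a) (ha1 : a < 1) (hb : 1 < b)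
    (ω : List Bool) (x M : ℝ) (hx : 0 ≤ x) (hxM : x ≤ M)
    (hM : ∀ k < ω.length,
      ((ω.take (k + 1)).foldl (fun z i => if i then b * z + 1 else a * z) x) ≤ M) :
    ((ω.count true : ℝ) - 1) * x / (b * M ^ 2) ≤
      1 / (a ^ (ω.count false) * b ^ (ω.count true)) := by
  have hM0 : 0 ≤ M := hx.trans hxM
  have hb0 : 0 < b := by linarith
  have hend : ω.foldl (fun z i => if i then b * z + 1 else a * z) x ≤ M := by
    rcases Nat.eq_zero_or_pos ω.length with h | h
    · rw [List.length_eq_zero_iff.mp h]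
      simpa using hxM
    · have := hM (ω.length - 1) (by omega)
      rwa [List.take_of_length_le (by omega)] at this
  have key := (orbit_lower_bounds a b ha hb0 x M hx hM0 ω hM).2.trans
    (mul_le_mul_of_nonneg_right hend hM0)
  have hP : 0 < a ^ (ω.count false) * b ^ (ω.count true) := by positivity
  rcases hM0.eq_or_lt with h | h
  · -- Here the left-hand side is a division by zero, hence zero.
    rw [← h]
    simpa only [ne_eq, OfNat.ofNat_ne_zero, not_false_eq_true, zero_pow, mul_zero, div_zero] using
      (one_div_pos.2 hP).le
  · rw [div_le_div_iff₀ (by positivity) hP]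
    nlinarith [mul_nonneg hP.le hx, mul_nonneg (sub_nonneg.2 hb.le) (sq_nonneg M)]
end

section
/- For all x, y > 0 there exists a constant K > 0 such that for every ε > 0 there exists a 0-1 word ω = (ω₀,…,ω_{n−1}) with |T_ω(x) − y| < ε and with min(x, y−ε) ≤ T_{ω_k} ∘ ⋯ ∘ T_{ω₀}(x) ≤ K for every k < n. -/
/-!
Put `β = 1 / (b - 1)`. A block of `q` letters `1` followed by `p` letters `0` acts by
`S z = α z + (α - a ^ p) β` with `α = a ^ p b ^ q`. A one-sided Dirichlet approximation
(`exists_pow_mul_pow_near_one`) makes `α ≤ 1` as close to `1` as desired with `p ≥ 1`, so that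
`S z ≥ z + c` with `c > 0` for all `z` in a prescribed bounded range.

Then `J = [y, S y]` is a fundamental domain for `S`: each `v ∈ J` has `v / a = S^n u` for some
`u ∈ J` and some bounded `n`. Hence `v` is the image of `u` under `n` blocks followed by a `0`,
a word of bounded length, of slope `a α ^ n ≤ a < 1`, along which the trajectory of `u` stays
above `y` (`exists_pullback`). Pulling `y` back `n` times this way and running the resulting word
from a point `X ≥ S y`, the trajectory of `X` dominates the pulled-back one, so it stays above `y`,
while the distance to `y` at the end is at most `a ^ n X` (`exists_word_from_above`). The bounded
word length gives the upper bound independently of `n`. Finally, letters `1` lift `x` to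
such an `X`.
-/

/-- The action `T_ω(z)` of a word, the first letter being applied first; `true` stands for `1`. -/
def act (a b : ℝ) (w : List Bool) (z : ℝ) : ℝ :=
  w.foldl (fun z i => if i then b * z + 1 else a * z) z

lemma act_nil (a b z : ℝ) : act a b [] z = z := rfl

lemma act_append (a b z : ℝ) (u w : List Bool) :
    act a b (u ++ w) z = act a b w (act a b u z) := by
  simp [act, List.foldl_append]

lemma act_cons_true (a b z : ℝ) (w : List Bool) :
    act a b (true :: w) z = act a b w (b * z + 1) := by
  simp [act]

lemma act_cons_false (a b z : ℝ) (w : List Bool) :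
    act a b (false :: w) z = act a b w (a * z) := by
  simp [act]

lemma act_mono {a b : ℝ} (ha : 0 < a) (hb : 1 < b) (w : List Bool) {z z' : ℝ} (h : z ≤ z') :
    act a b w z ≤ act a b w z' := by
  induction w generalizing z z' with
  | nil => simpa [act_nil] using h
  | cons i w ih =>
    cases i
    · rw [act_cons_false, act_cons_false]; exact ih (by gcongr)
    · rw [act_cons_true, act_cons_true]; exact ih (by gcongr)

/-- In the coordinate `z + 1 / (b - 1)` the map `T₁` is multiplication by `b`, and `T₀` expands
by no more than that; so a word of length at most `L` expands by at most `b ^ L`. -/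
lemma act_le {a b : ℝ} (ha : 0 < a) (ha1 : a < 1) (hb : 1 < b) {L : ℕ} (w : List Bool)
    (hw : w.length ≤ L) {z : ℝ} (hz : 0 ≤ z) :
    act a b w z ≤ b ^ L * (z + 1 / (b - 1)) := by
  have hβ : 0 < 1 / (b - 1) := one_div_pos.2 (by linarith)
  have hβ1 : b * (1 / (b - 1)) = 1 / (b - 1) + 1 := by
    have : b - 1 ≠ 0 := by linarith
    field_simp; ring
  set β := 1 / (b - 1)
  induction w generalizing z L with
  | nil =>
    rw [act_nil]
    have : (1 : ℝ) ≤ b ^ L := one_le_pow₀ hb.le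
    nlinarith
  | cons i w ih =>
    obtain ⟨L, rfl⟩ : ∃ M, L = M + 1 := ⟨L - 1, by simp at hw; omega⟩
    have hl : w.length ≤ L := by simpa using hw
    have hp : 0 < b ^ L := by positivity
    cases i
    · rw [act_cons_false]
      refine (ih hl (by positivity)).trans ?_
      rw [pow_succ, mul_assoc]
      refine mul_le_mul_of_nonneg_left ?_ hp.le
      nlinarith
    · rw [act_cons_true]
      refine (ih hl (by positivity)).trans ?_
      rw [pow_succ, mul_assoc]
      refine mul_le_mul_of_nonneg_left ?_ hp.le
      nlinarith

lemma act_replicate_true {a b : ℝ} (hb : 1 < b) (k : ℕ) (z : ℝ) :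
    act a b (List.replicate k true) z = b ^ k * (z + 1 / (b - 1)) - 1 / (b - 1) := by
  have : b - 1 ≠ 0 := by linarith
  induction k generalizing z with
  | zero => simp [act_nil]
  | succ k ih =>
    rw [List.replicate_succ, act_cons_true, ih]
    field_simp
    ring

lemma act_replicate_false (a b : ℝ) (k : ℕ) (z : ℝ) :
    act a b (List.replicate k false) z = a ^ k * z := by
  induction k generalizing z with
  | zero => simp [act_nil]
  | succ k ih =>
    rw [List.replicate_succ, act_cons_false, ih]
    ring

/-- The trajectory of `z` along `w`, starting point and endpoint included, stays above `m`. -/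
def Above (a b m : ℝ) (w : List Bool) (z : ℝ) : Prop :=
  ∀ p, p <+: w → m ≤ act a b p z

lemma Above.mono {a b m : ℝ} (ha : 0 < a) (hb : 1 < b) {w : List Bool} {z z' : ℝ}
    (h : Above a b m w z) (hz : z ≤ z') : Above a b m w z' :=
  fun p hp => (h p hp).trans (act_mono ha hb p hz)

lemma prefix_append_cases {p u w : List Bool} (h : p <+: u ++ w) :
    p <+: u ∨ ∃ r, r <+: w ∧ p = u ++ r := by
  obtain ⟨t, ht⟩ := h
  rcases List.append_eq_append_iff.1 ht with ⟨r, h1, -⟩ | ⟨r, h1, h2⟩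
  · exact Or.inl ⟨r, h1.symm⟩
  · exact Or.inr ⟨r, ⟨t, h2.symm⟩, h1⟩

lemma Above.append {a b m : ℝ} {u w : List Bool} {z : ℝ}
    (hu : Above a b m u z) (hw : Above a b m w (act a b u z)) : Above a b m (u ++ w) z := by
  intro p hp
  rcases prefix_append_cases hp with h | ⟨r, hr, rfl⟩
  · exact hu p h
  · rw [act_append]; exact hw r hr

lemma above_replicate_true {a b z : ℝ} (hb : 1 < b) (hz : 0 ≤ z) (k : ℕ) :
    Above a b z (List.replicate k true) z := by
  intro p hp
  obtain ⟨_, he⟩ := List.prefix_replicate_iff.1 hp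
  rw [he, act_replicate_true hb]
  have h1 : (1 : ℝ) ≤ b ^ p.length := one_le_pow₀ hb.le
  have hβ : 0 < 1 / (b - 1) := one_div_pos.2 (by linarith)
  nlinarith

/-- Letters `0` only decrease, so it suffices to control the endpoint. -/
lemma above_replicate_false {a b m z : ℝ} (ha : 0 < a) (ha1 : a < 1) (hz : 0 ≤ z) (k : ℕ)
    (h : m ≤ a ^ k * z) : Above a b m (List.replicate k false) z := by
  intro p hp
  obtain ⟨hl, he⟩ := List.prefix_replicate_iff.1 hp
  rw [he, act_replicate_false]
  refine h.trans ?_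
  have := pow_le_pow_of_le_one ha.le ha1.le hl
  gcongr

/-- One-sided Dirichlet approximation for the multiplicative semigroup generated by `a`, `b`. -/
lemma exists_pow_mul_pow_near_one {a b : ℝ} (ha : 0 < a) (ha1 : a < 1) (hb : 1 < b)
    {η : ℝ} (hη : 0 < η) :
    ∃ p q : ℕ, 1 ≤ p ∧ a ^ p * b ^ q ≤ 1 ∧ 1 - η < a ^ p * b ^ q := by
  have hb0 : 0 < b := by linarith
  have hlb : 0 < Real.log b := Real.log_pos hb
  have hla : Real.log a < 0 := Real.log_neg ha ha1
  obtain ⟨n, hn⟩ := exists_nat_gt (Real.log b / η)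
  have hn0 : 0 < n := by
    have : (0 : ℝ) < n := lt_trans (by positivity) hn
    exact_mod_cast this
  set ξ := -Real.log a / Real.log b with hξ
  have hξ0 : 0 < ξ := by apply div_pos <;> linarith
  obtain ⟨k, hk, -, hkr⟩ := Real.exists_nat_abs_mul_sub_round_le ξ hn0
  have hr0 : 0 ≤ round ((k : ℝ) * ξ) := by
    rw [round_eq]
    exact Int.floor_nonneg.2 (by positivity)
  obtain ⟨q, hq⟩ := Int.eq_ofNat_of_zero_le hr0
  rw [hq] at hkr
  have hα0 : 0 < a ^ k * b ^ q := by positivity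
  have hlog : Real.log (a ^ k * b ^ q) = Real.log b * (q - k * ξ) := by
    rw [Real.log_mul (by positivity) (by positivity), Real.log_pow, Real.log_pow, hξ]
    field_simp
    ring
  have habs : |Real.log (a ^ k * b ^ q)| < η := by
    rw [hlog, abs_mul, abs_of_pos hlb, abs_sub_comm]
    have h1 : Real.log b < η * n := by rwa [div_lt_iff₀' hη] at hn
    have h2 : Real.log b * |(k : ℝ) * ξ - q| ≤ Real.log b * (1 / (n + 1)) := by
      gcongr
      simpa using hkr
    refine h2.trans_lt ?_
    rw [mul_one_div, div_lt_iff₀ (by positivity)]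
    nlinarith
  obtain ⟨hlo, hhi⟩ := abs_lt.1 habs
  rcases le_or_gt (a ^ k * b ^ q) 1 with h1 | h1
  · refine ⟨k, q, hk, h1, ?_⟩
    have := Real.add_one_le_exp (Real.log (a ^ k * b ^ q))
    rw [Real.exp_log hα0] at this
    linarith
  · -- The approximation is from the wrong side: multiply `a` by it as often as the bound `1` allows.
    obtain ⟨j, hj1, hj2⟩ := exists_nat_pow_near (one_le_inv_iff₀.2 ⟨ha, ha1.le⟩) h1
    have e : a ^ (1 + k * j) * b ^ (q * j) = a * (a ^ k * b ^ q) ^ j := by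
      rw [mul_pow, ← pow_mul, ← pow_mul]; ring
    refine ⟨1 + k * j, q * j, by omega, ?_, ?_⟩ <;> rw [e]
    · calc a * (a ^ k * b ^ q) ^ j ≤ a * a⁻¹ := by gcongr
        _ = 1 := mul_inv_cancel₀ ha.ne'
    · have h3 : 1 < a * (a ^ k * b ^ q) ^ j * (a ^ k * b ^ q) := by
        have := mul_lt_mul_of_pos_left hj2 ha
        rw [mul_inv_cancel₀ ha.ne', pow_succ] at this
        linarith
      have h4 : (a ^ k * b ^ q)⁻¹ < a * (a ^ k * b ^ q) ^ j := by
        rwa [inv_lt_iff_one_lt_mul₀ hα0]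
      have h5 := Real.add_one_le_exp (-Real.log (a ^ k * b ^ q))
      rw [Real.exp_neg, Real.exp_log hα0] at h5
      linarith

/-- The block `1^q 0^p`. -/
def block (p q : ℕ) : List Bool := List.replicate q true ++ List.replicate p false

/-- `n` consecutive copies of `1^q 0^p`. -/
def blocks (p q : ℕ) : ℕ → List Bool
  | 0 => []
  | n + 1 => blocks p q n ++ block p q

lemma length_blocks (p q n : ℕ) : (blocks p q n).length = n * (p + q) := by
  induction n with
  | zero => simp [blocks]
  | succ n ih => simp [blocks, block, ih]; ring

lemma act_block {a b : ℝ} (hb : 1 < b) (p q : ℕ) (z : ℝ) :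
    act a b (block p q) z =
      (a ^ p * b ^ q) * z + (a ^ p * b ^ q - a ^ p) * (1 / (b - 1)) := by
  rw [block, act_append, act_replicate_true hb, act_replicate_false]
  ring

lemma above_block {a b z : ℝ} (ha : 0 < a) (ha1 : a < 1) (hb : 1 < b) {p q : ℕ} (hz : 0 ≤ z)
    (h : z ≤ act a b (block p q) z) : Above a b z (block p q) z := by
  have h1 := above_replicate_true (a := a) hb hz q
  refine h1.append (above_replicate_false ha ha1 (hz.trans (h1 _ List.prefix_rfl)) p ?_)
  rwa [block, act_append, act_replicate_false] at h

lemma act_blocks (a b : ℝ) (p q n : ℕ) (z : ℝ) :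
    act a b (blocks p q n) z = (act a b (block p q))^[n] z := by
  induction n with
  | zero => rfl
  | succ n ih => rw [blocks, act_append, ih, Function.iterate_succ_apply']

lemma act_blocks_sub {a b : ℝ} (hb : 1 < b) (p q n : ℕ) (z z' : ℝ) :
    act a b (blocks p q n) z - act a b (blocks p q n) z' = (a ^ p * b ^ q) ^ n * (z - z') := by
  induction n with
  | zero => simp [blocks, act_nil]
  | succ n ih =>
    rw [blocks, act_append, act_append, act_block hb, act_block hb, pow_succ]
    linear_combination (a ^ p * b ^ q) * ih

/-- For a suitable interval `[y, Y]`, each of its points is the image of another one under a word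
of bounded length and of slope at most `a`, the trajectory staying above `y`. -/
lemma exists_pullback {a b : ℝ} (ha : 0 < a) (ha1 : a < 1) (hb : 1 < b) {y : ℝ} (hy : 0 < y) :
    ∃ (Y : ℝ) (L : ℕ), y ≤ Y ∧ ∀ v, y ≤ v → v ≤ Y → ∃ (u : ℝ) (w : List Bool),
      y ≤ u ∧ u ≤ Y ∧ w.length ≤ L ∧ act a b w u = v ∧ Above a b y w u ∧
      ∀ z, u ≤ z → act a b w z - v ≤ a * (z - u) := by
  have hβ : 0 < 1 / (b - 1) := one_div_pos.2 (by linarith)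
  set β := 1 / (b - 1) with hβdef
  -- This `η` makes `(1 - α) (y + β) / a < (α - a) β` for every `α > 1 - η`.
  set D := (y + β) / a + β with hD
  have hD0 : 0 < D := by positivity
  obtain ⟨p, q, hp, hα1, hαη⟩ := exists_pow_mul_pow_near_one ha ha1 hb
    (η := (1 - a) * β / D) (div_pos (mul_pos (by linarith) hβ) hD0)
  have hα0 : 0 < a ^ p * b ^ q := by positivity
  have hS := act_block (a := a) hb p q
  rw [← hβdef] at hS
  have hSn := act_blocks a b p q
  have hsub := act_blocks_sub (a := a) hb p q
  have hap : a ^ p ≤ a := by simpa using pow_le_pow_of_le_one ha.le ha1.le hp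
  have hap0 : 0 < a ^ p := by positivity
  set α := a ^ p * b ^ q with hα
  set S := act a b (block p q) with hSdef
  have hYle : S y ≤ y + β := by rw [hS]; nlinarith
  set c := (α - a ^ p) * β - (1 - α) * ((y + β) / a) with hc
  have hc0 : 0 < c := by
    have h1 : (1 - α) * D < (1 - a) * β := by
      rw [← lt_div_iff₀ hD0]; linarith
    have h2 : a ^ p * β ≤ a * β := by gcongr
    rw [hc]
    rw [hD] at h1
    nlinarith
  have hgrow : ∀ z, z ≤ (y + β) / a → z + c ≤ S z := by
    intro z hz
    rw [hS, hc]
    have : (1 - α) * z ≤ (1 - α) * ((y + β) / a) :=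
      mul_le_mul_of_nonneg_left hz (by linarith)
    linarith
  have hyV : y ≤ (y + β) / a := by
    rw [le_div_iff₀ ha]; nlinarith
  obtain ⟨N, hN⟩ := exists_nat_gt ((y + β) / a / c)
  rw [div_lt_iff₀ hc0] at hN
  refine ⟨S y, N * (p + q) + 1, by linarith [hgrow y hyV], ?_⟩
  intro v hv1 hv2
  have hVle : v / a ≤ (y + β) / a := by gcongr; linarith
  have hyv : y ≤ v / a := by rw [le_div_iff₀ ha]; nlinarith
  -- The iterates of `y` grow by at least `c` as long as they stay below `v / a`.
  have hlin : ∀ n : ℕ, (∀ j < n, S^[j] y ≤ v / a) → y + n * c ≤ S^[n] y := by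
    intro n
    induction n with
    | zero => intro _; simp
    | succ n ih =>
      intro h
      have h1 := ih fun j hj => h j (by omega)
      have h2 := hgrow _ ((h n (by omega)).trans hVle)
      rw [Function.iterate_succ_apply']
      push_cast
      linarith
  have hex : ∃ n, v / a < S^[n] y := by
    by_contra! hcon
    have h1 := hlin N fun j _ => hcon j
    have h2 := hcon N
    linarith
  classical
  obtain ⟨n, hn⟩ : ∃ n, Nat.find hex = n + 1 := by
    refine Nat.exists_eq_succ_of_ne_zero fun h0 => ?_
    have := Nat.find_spec hex
    rw [h0] at this
    simp only [Function.iterate_zero, id] at this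
    linarith
  have hlow : ∀ j ≤ n, S^[j] y ≤ v / a := fun j hj =>
    not_lt.1 (Nat.find_min hex (by omega))
  have hup : v / a < S^[n + 1] y := hn ▸ Nat.find_spec hex
  have hnN : n ≤ N := by
    by_contra! hlt
    have h1 := hlin n fun j hj => hlow j hj.le
    have h2 := hlow n le_rfl
    have h3 : (N : ℝ) * c ≤ n * c := by gcongr
    linarith
  have habove : ∀ j ≤ n, Above a b y (blocks p q j) y := by
    intro j
    induction j with
    | zero =>
      intro _ r hr
      rw [blocks, List.prefix_nil] at hr
      rw [hr, act_nil]
    | succ j ih =>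
      intro hj
      have h1 := ih (by omega)
      refine h1.append fun r hr => ?_
      have h2 : y ≤ act a b (blocks p q j) y := h1 _ List.prefix_rfl
      refine h2.trans (above_block ha ha1 hb (hy.le.trans h2) ?_ r hr)
      rw [hSn]
      linarith [hgrow _ ((hlow j (by omega)).trans hVle)]
  -- The affine map `S^[n]` has slope `α ^ n`; this `u` solves `S^[n] u = v / a`.
  have hαn : 0 < α ^ n := by positivity
  have hαn1 : α ^ n ≤ 1 := pow_le_one₀ hα0.le hα1
  have hyu : y ≤ y + (v / a - S^[n] y) / α ^ n := by
    have : 0 ≤ (v / a - S^[n] y) / α ^ n := div_nonneg (by linarith [hlow n le_rfl]) hαn.le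
    linarith
  have hu : act a b (blocks p q n) (y + (v / a - S^[n] y) / α ^ n) = v / a := by
    have h1 := hsub n (y + (v / a - S^[n] y) / α ^ n) y
    rw [add_sub_cancel_left, mul_div_cancel₀ _ hαn.ne', hSn n y] at h1
    linarith
  have hend : act a b (blocks p q n ++ [false]) (y + (v / a - S^[n] y) / α ^ n) = v := by
    rw [act_append, hu, act_cons_false, act_nil, mul_div_cancel₀ _ ha.ne']
  refine ⟨y + (v / a - S^[n] y) / α ^ n, blocks p q n ++ [false], hyu, ?_, ?_, hend, ?_, ?_⟩
  · have h1 := hsub n (S y) y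
    rw [hSn n, hSn n, ← Function.iterate_succ_apply] at h1
    have h2 : (v / a - S^[n] y) / α ^ n ≤ S y - y := by
      rw [div_le_iff₀' hαn]; linarith
    linarith
  · rw [List.length_append, length_blocks]
    simpa using Nat.mul_le_mul_right _ hnN
  · refine ((habove n le_rfl).mono ha hb hyu).append ?_
    rw [hu]
    refine above_replicate_false (k := 1) ha ha1 (hy.le.trans hyv) ?_
    rwa [pow_one, mul_div_cancel₀ _ ha.ne']
  · intro z hz
    have h1 := hsub n z (y + (v / a - S^[n] y) / α ^ n)
    rw [hu] at h1
    rw [act_append, act_cons_false, act_nil]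
    have h2 : a * act a b (blocks p q n) z - v
        = a * (act a b (blocks p q n) z - v / a) := by
      rw [mul_sub, mul_div_cancel₀ _ ha.ne']
    rw [h2, h1]
    refine mul_le_mul_of_nonneg_left ?_ ha.le
    exact mul_le_of_le_one_left (by linarith) hαn1

/-- Composing `n` pull-backs: from any `X ≥ Y` the point `v` is approached from above. -/
lemma exists_word_from_above {a b : ℝ} (ha : 0 < a) (ha1 : a < 1) (hb : 1 < b) {y Y : ℝ}
    (hy : 0 < y) {L : ℕ}
    (hJ : ∀ v, y ≤ v → v ≤ Y → ∃ (u : ℝ) (w : List Bool),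
      y ≤ u ∧ u ≤ Y ∧ w.length ≤ L ∧ act a b w u = v ∧ Above a b y w u ∧
      ∀ z, u ≤ z → act a b w z - v ≤ a * (z - u))
    {X : ℝ} (hX : Y ≤ X) (n : ℕ) :
    ∀ v, y ≤ v → v ≤ Y → ∃ w : List Bool, v ≤ act a b w X ∧ act a b w X ≤ v + a ^ n * X ∧
      Above a b y w X ∧ ∀ p, p <+: w → act a b p X ≤ b ^ L * (X + Y + 1 / (b - 1)) := by
  have hβ : 0 < 1 / (b - 1) := one_div_pos.2 (by linarith)
  induction n with
  | zero =>
    intro v hv1 hv2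
    refine ⟨[], by rw [act_nil]; linarith, by rw [act_nil]; linarith, ?_, ?_⟩
    · intro p hp
      rw [List.prefix_nil] at hp
      rw [hp, act_nil]; linarith
    · intro p hp
      rw [List.prefix_nil] at hp
      rw [hp, act_nil]
      have : (1 : ℝ) ≤ b ^ L := one_le_pow₀ hb.le
      nlinarith
  | succ n ih =>
    intro v hv1 hv2
    obtain ⟨u, w₁, hu1, hu2, hl, hw, hab, hcon⟩ := hJ v hv1 hv2
    obtain ⟨w₀, h1, h2, h3, h4⟩ := ih u hu1 hu2
    have han : a ^ n ≤ 1 := pow_le_one₀ ha.le ha1.le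
    refine ⟨w₀ ++ w₁, ?_, ?_, h3.append (hab.mono ha hb h1), ?_⟩
    · rw [act_append, ← hw]
      exact act_mono ha hb w₁ h1
    · rw [act_append, pow_succ]
      have h5 := hcon _ h1
      nlinarith
    · intro p hp
      rcases prefix_append_cases hp with h | ⟨r, hr, rfl⟩
      · exact h4 p h
      · rw [act_append]
        refine (act_le ha ha1 hb r (hr.length_le.trans hl) (by linarith)).trans ?_
        have : 0 < b ^ L := by positivity
        refine mul_le_mul_of_nonneg_left ?_ this.le
        nlinarith

/-- **Theorem 2.3 (Theorem 3.4 of Misiurewicz–Rodrigues).** Let `T₀(x) = a·x`,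
`T₁(x) = b·x + 1` with `0 < a < 1 < b`. Given `x, y > 0` there is a constant `K > 0`
(depending on `x` and `y`) such that for every `ε > 0` there is a 0-1 word `ω` with
`|T_ω(x) − y| < ε` and `min(x, y − ε) ≤ T_{ω_k} ∘ ⋯ ∘ T_{ω₀}(x) ≤ K` for every `k < n`. -/
theorem theorem_MR34 (a b : ℝ) (ha : 0 < a) (ha1 : a < 1) (hb : 1 < b)
    (x y : ℝ) (hx : 0 < x) (hy : 0 < y) :
    ∃ K > 0, ∀ ε > 0, ∃ ω : List Bool,
      |ω.foldl (fun z i => if i then b * z + 1 else a * z) x - y| < ε ∧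
      ∀ k < ω.length,
        min x (y - ε) ≤ (ω.take (k + 1)).foldl (fun z i => if i then b * z + 1 else a * z) x ∧
        (ω.take (k + 1)).foldl (fun z i => if i then b * z + 1 else a * z) x ≤ K := by
  have hβ : 0 < 1 / (b - 1) := one_div_pos.2 (by linarith)
  obtain ⟨Y, L, hyY, hJ⟩ := exists_pullback ha ha1 hb hy
  obtain ⟨N, hN⟩ := pow_unbounded_of_one_lt ((Y + 1 / (b - 1)) / (x + 1 / (b - 1))) hb
  have hX : Y ≤ act a b (List.replicate N true) x := by
    rw [div_lt_iff₀ (by positivity)] at hN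
    rw [act_replicate_true hb]
    linarith
  have hab := above_replicate_true (a := a) hb hx.le N
  set X := act a b (List.replicate N true) x with hXdef
  have hX0 : 0 < X := by linarith
  refine ⟨max (b ^ N * (x + 1 / (b - 1))) (b ^ L * (X + Y + 1 / (b - 1))),
    lt_max_of_lt_left (by positivity), fun ε hε => ?_⟩
  obtain ⟨n, hn⟩ := exists_pow_lt_of_lt_one (div_pos hε hX0) ha1
  rw [lt_div_iff₀ hX0] at hn
  obtain ⟨w, h1, h2, h3, h4⟩ := exists_word_from_above ha ha1 hb hy hJ hX n y le_rfl hyY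
  refine ⟨List.replicate N true ++ w, ?_, fun k _ => ?_⟩
  · change |act a b (List.replicate N true ++ w) x - y| < ε
    rw [act_append, ← hXdef, abs_lt]
    constructor <;> linarith
  · change _ ≤ act a b _ x ∧ act a b _ x ≤ _
    rcases prefix_append_cases (w := w) (u := List.replicate N true)
      ⟨_, List.take_append_drop (k + 1) _⟩ with h | ⟨r, hr, h⟩
    · refine ⟨(min_le_left _ _).trans (hab _ h), le_max_of_le_left ?_⟩
      exact act_le ha ha1 hb _ (by simpa using h.length_le) hx.le
    · rw [h, act_append, ← hXdef]
      refine ⟨(min_le_right _ _).trans ?_, le_max_of_le_right (h4 r hr)⟩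
      linarith [h3 r hr]
end

section
/- Fix x, y ∈ ℝ₊ and an infinite 0-1 sequence ω̄ = (ω₀, ω₁, …) ∈ Σ. Define x₀ = x, y₀ = y and inductively x_{n+1} = T_{ω_n}(x_n), y_{n+1} = T_{ω_n}(y_n). Then 1/(1+x_n) − 1/(1+y_n) → 0 as n → ∞. -/
/-!
Let `P n` be the product of the first `n` slopes, `v n = 1 / P n`, and let `S n` be the sum of the
`v (k + 1)` over the indices `k < n` with `ω k = 1`. Unrolling the recursion gives
`X n = (x + S n) / v n`, hence
`1 / (1 + X n) - 1 / (1 + Y n) = (y - x) * v n / ((v n + x + S n) * (v n + y + S n))`,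
whose absolute value is at most `|y - x| * v n / (v n + S n) ^ 2`.

The sequence `S` is monotone. If it is unbounded, the bound `|y - x| / (v n + S n)` tends to `0`.
If it converges, its increments tend to `0`. When `1` occurs only finitely often in `ω`, `v`
eventually grows geometrically and the same bound applies. When `1` occurs infinitely often, `v` is
small right after every late `1`; as `v` increases along a block of zeros and drops only by the
factor `b` at the next `1`, this forces `v → 0` (`invSlope_tendsto_zero`), while `S` stays bounded
away from `0`.
-/

open Filter

/-- The inverse of the product of the first `n` slopes along `ω`. -/
noncomputable def invSlope (a b : ℝ) (ω : ℕ → Bool) : ℕ → ℝ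
  | 0 => 1
  | n + 1 => if ω n then invSlope a b ω n / b else invSlope a b ω n / a

/-- The sum of `invSlope a b ω (k + 1)` over the indices `k < n` at which `ω` is `1`; the quotient
`invSum a b ω n / invSlope a b ω n` is the `n`-th point of the orbit of `0`. -/
noncomputable def invSum (a b : ℝ) (ω : ℕ → Bool) : ℕ → ℝ
  | 0 => 0
  | n + 1 => invSum a b ω n + if ω n then invSlope a b ω (n + 1) else 0

lemma invSlope_pos {a b : ℝ} (ha : 0 < a) (hb : 0 < b) (ω : ℕ → Bool) (n : ℕ) :
    0 < invSlope a b ω n := by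
  induction n with
  | zero => simp [invSlope]
  | succ n ih =>
    rw [invSlope]
    split_ifs <;> positivity

lemma invSum_monotone {a b : ℝ} (ha : 0 < a) (hb : 0 < b) (ω : ℕ → Bool) :
    Monotone (invSum a b ω) := by
  refine monotone_nat_of_le_succ fun n => ?_
  rw [invSum]
  have := invSlope_pos ha hb ω (n + 1)
  split_ifs <;> linarith

lemma invSum_nonneg {a b : ℝ} (ha : 0 < a) (hb : 0 < b) (ω : ℕ → Bool) (n : ℕ) :
    0 ≤ invSum a b ω n :=
  invSum_monotone ha hb ω (Nat.zero_le n)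

lemma orbit_eq {a b : ℝ} (ha : 0 < a) (hb : 0 < b) (ω : ℕ → Bool) (X : ℕ → ℝ)
    (hX : ∀ n, X (n + 1) = if ω n then b * X n + 1 else a * X n) (n : ℕ) :
    X n = (X 0 + invSum a b ω n) / invSlope a b ω n := by
  induction n with
  | zero => simp [invSlope, invSum]
  | succ n ih =>
    have hv := invSlope_pos ha hb ω n
    rw [hX, ih, invSum, invSlope]
    split_ifs
    · field_simp
      ring
    · field_simp
      ring

/-- If `invSlope` is at most `ε` right after every `1` of `ω` from `n` on, and there is such a `1`,
then it is at most `b * ε` at `n`: it only increases up to the next `1`, where it is divided by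
`b`. -/
lemma invSlope_le {a b ε : ℝ} (ha : 0 < a) (ha1 : a < 1) (hb : 0 < b) (ω : ℕ → Bool) (m : ℕ) :
    ∀ n, (∀ k ≥ n, ω k = true → invSlope a b ω (k + 1) ≤ ε) → ω (n + m) = true →
      invSlope a b ω n ≤ b * ε := by
  have hone : ∀ n, (∀ k ≥ n, ω k = true → invSlope a b ω (k + 1) ≤ ε) → ω n = true →
      invSlope a b ω n ≤ b * ε := by
    intro n h hn
    have h1 := h n le_rfl hn
    rw [invSlope, if_pos hn, div_le_iff₀ hb] at h1
    linarith
  induction m with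
  | zero => exact hone
  | succ m ih =>
    intro n h hm
    by_cases hn : ω n = true
    · exact hone n h hn
    · have h1 := ih (n + 1) (fun k hk => h k (by omega)) (by rwa [Nat.add_right_comm])
      rw [invSlope, if_neg hn] at h1
      exact (le_div_self (invSlope_pos ha hb ω n).le ha ha1.le).trans h1

lemma invSlope_tendsto_zero {a b l : ℝ} (ha : 0 < a) (ha1 : a < 1) (hb : 0 < b) (ω : ℕ → Bool)
    (hl : Tendsto (invSum a b ω) atTop (nhds l)) (hω : ∃ᶠ n in atTop, ω n = true) :
    Tendsto (invSlope a b ω) atTop (nhds 0) := by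
  have hd : Tendsto (fun n => invSum a b ω (n + 1) - invSum a b ω n) atTop (nhds 0) := by
    simpa using (hl.comp (tendsto_add_atTop_nat 1)).sub hl
  rw [Metric.tendsto_atTop]
  intro ε hε
  have hε' : 0 < ε / (2 * b) := by positivity
  obtain ⟨N, hN⟩ := eventually_atTop.1 (hd.eventually (gt_mem_nhds hε'))
  refine ⟨N, fun n hn => ?_⟩
  obtain ⟨j, hj, hωj⟩ := frequently_atTop.1 hω n
  have h := invSlope_le (ε := ε / (2 * b)) ha ha1 hb ω (j - n) n (fun k hk hωk => by
    have h1 := hN k (by omega)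
    rw [invSum, if_pos hωk, add_sub_cancel_left] at h1
    exact h1.le) (by rwa [Nat.add_sub_cancel' hj])
  have h2 : b * (ε / (2 * b)) = ε / 2 := by field_simp
  rw [Real.dist_eq, sub_zero, abs_of_pos (invSlope_pos ha hb ω n)]
  linarith

lemma invSlope_tendsto_atTop {a b : ℝ} (ha : 0 < a) (ha1 : a < 1) (hb : 0 < b) (ω : ℕ → Bool)
    (hω : ∀ᶠ n in atTop, ¬ ω n = true) : Tendsto (invSlope a b ω) atTop atTop := by
  obtain ⟨N, hN⟩ := eventually_atTop.1 hω
  have h : ∀ n, invSlope a b ω (n + N) = invSlope a b ω N * (1 / a) ^ n := by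
    intro n
    induction n with
    | zero => simp
    | succ n ih =>
      rw [Nat.add_right_comm, invSlope, if_neg (hN _ (by omega)), ih, pow_succ]
      ring
  rw [← tendsto_add_atTop_iff_nat N]
  simp_rw [h]
  exact (tendsto_pow_atTop_atTop_of_one_lt ((one_lt_div ha).2 ha1)).const_mul_atTop
    (invSlope_pos ha hb ω N)

/-- **Lemma 3.1 (contraction lemma).** Let `T₀(x) = a·x`, `T₁(x) = b·x + 1` with
`0 < a < 1 < b`. Fix `x, y ∈ ℝ₊` and an infinite 0-1 sequence `ω̄`. Define `x₀ = x`,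
`y₀ = y` and inductively `x_{n+1} = T_{ω_n}(x_n)`, `y_{n+1} = T_{ω_n}(y_n)`.
Then `1/(1+x_n) − 1/(1+y_n) → 0` as `n → ∞`. -/
theorem contraction_lemma (a b : ℝ) (ha : 0 < a) (ha1 : a < 1) (hb : 1 < b)
    (ω : ℕ → Bool) (x y : ℝ) (hx : 0 ≤ x) (hy : 0 ≤ y)
    (X Y : ℕ → ℝ) (hX0 : X 0 = x) (hY0 : Y 0 = y)
    (hX : ∀ n, X (n + 1) = if ω n then b * X n + 1 else a * X n)
    (hY : ∀ n, Y (n + 1) = if ω n then b * Y n + 1 else a * Y n) :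
    Tendsto (fun n => 1 / (1 + X n) - 1 / (1 + Y n)) atTop (nhds 0) := by
  have hb0 : 0 < b := by linarith
  set v := invSlope a b ω with hv_def
  set S := invSum a b ω with hS_def
  have hv : ∀ n, 0 < v n := invSlope_pos ha hb0 ω
  have hS : ∀ n, 0 ≤ S n := invSum_nonneg ha hb0 ω
  have hbound : ∀ n, |1 / (1 + X n) - 1 / (1 + Y n)| ≤ |y - x| * (v n / (v n + S n) ^ 2) := by
    intro n
    have hvn := hv n
    have hSn := hS n
    have e : 1 / (1 + X n) - 1 / (1 + Y n)
        = (y - x) * (v n / ((v n + (x + S n)) * (v n + (y + S n)))) := by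
      rw [orbit_eq ha hb0 ω X hX n, orbit_eq ha hb0 ω Y hY n, hX0, hY0, ← hv_def, ← hS_def]
      have h1 : 0 < v n + (x + S n) := by positivity
      have h2 : 0 < v n + (y + S n) := by positivity
      rw [one_add_div hvn.ne', one_add_div hvn.ne']
      field_simp
      ring
    rw [e, abs_mul, abs_of_nonneg (a := v n / _) (by positivity), sq]
    gcongr <;> linarith
  refine squeeze_zero_norm hbound ?_
  rw [← mul_zero |y - x|]
  refine Tendsto.const_mul _ ?_
  have hlarge : Tendsto (fun n => v n + S n) atTop atTop →
      Tendsto (fun n => v n / (v n + S n) ^ 2) atTop (nhds 0) := by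
    intro h
    refine squeeze_zero (fun n => div_nonneg (hv n).le (sq_nonneg _)) (fun n => ?_)
      h.inv_tendsto_atTop
    have hvn := hv n
    have hSn := hS n
    have hpos : 0 < v n + S n := by positivity
    rw [Pi.inv_apply, div_le_iff₀ (by positivity), sq, inv_mul_cancel_left₀ hpos.ne']
    linarith
  rcases tendsto_atTop_of_monotone (invSum_monotone ha hb0 ω) with hS' | ⟨l, hl⟩
  · exact hlarge (tendsto_atTop_mono (fun n => by have := hv n; linarith) hS')
  · by_cases hω : ∃ᶠ n in atTop, ω n = true
    · have hv0 : Tendsto v atTop (nhds 0) := invSlope_tendsto_zero ha ha1 hb0 ω hl hω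
      -- `S` is positive after the first `1`, so its limit is positive.
      obtain ⟨k, hk⟩ := hω.exists
      have hSk : 0 < S (k + 1) := by
        rw [hS_def, invSum, if_pos hk]
        exact add_pos_of_nonneg_of_pos (hS k) (hv (k + 1))
      have hl0 : 0 < l := hSk.trans_le ((invSum_monotone ha hb0 ω).ge_of_tendsto hl (k + 1))
      have h := hv0.div ((hv0.add hl).pow 2) (by positivity)
      rw [zero_div] at h
      exact h
    · rw [not_frequently] at hω
      exact hlarge (tendsto_atTop_mono (fun n => by have := hS n; linarith)
        (invSlope_tendsto_atTop ha ha1 hb0 ω hω))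
end

section
/- For any ergodic σ-invariant Borel probability measure ν on Σ, there is at most one Borel probability measure invariant for (T₀,T₁,ν). -/
/-!
Both generators strictly contract the pseudo-distance
`V_q(x, y) = |x - y| / (q + x + y)` on `[0, ∞)`, provided `0 < q < 2 / (b - 1)`: an affine map
`x ↦ c x + d` turns `V_q` into `V_{q'}` with `q' = (q + 2 d) / c`, and `q / a` and `(q + 2) / b`
are both at least `q + θ` for some `θ > 0` (`projDist_affine_le`). The contraction is not uniform
near infinity, but no hypothesis on the Lyapunov exponent of `ν` is needed.

Given two invariant measures with lifts `κ₁`, `κ₂` to the skew product, the relatively independent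
coupling of `κ₁` and `κ₂` over `ν` (`exists_coupling`) is pushed forward by the fibre product of the
skew product with itself. This keeps the marginals `κ₁`, `κ₂`, while `∫ V_q` decreases at each step
by `∫ (V_q - V_{q+θ})`. As `0 ≤ V_q ≤ 1`, the latter integral is arbitrarily small along the
sequence of couplings (`exists_coupling_lt`). On `{x ≤ t, t + ε < y ≤ M}` the integrand is bounded
below by a positive constant, so this set has arbitrarily small mass for suitable couplings, whence
`μ₁ [0, t] ≤ μ₂ [0, t + ε] + μ₂ (M, ∞]`. Letting `M → ∞` (here `μ₂ {∞} = 0` enters) and `ε → 0`,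
and exchanging the roles of the two measures, the distribution functions agree.
-/


open MeasureTheory Filter
open scoped ENNReal

/-- The one-sided full shift `σ` on `Σ = {0,1}^{ℕ₀}`. -/
def shiftMap (ω : ℕ → Bool) : ℕ → Bool := fun i => ω (i + 1)

/-- The skew product `τ(ω̄, x) = (σ(ω̄), T_{ω̄₀}(x))` on `X = Σ × ℝ̄₊`. -/
noncomputable def skewMap (a b : ℝ) (z : (ℕ → Bool) × ℝ≥0∞) : (ℕ → Bool) × ℝ≥0∞ :=
  (shiftMap z.1, Tmap a b (z.1 0) z.2)

/-- A Borel probability measure `μ` on `ℝ̄₊` with `μ({∞}) = 0` is *invariant for*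
`(T₀, T₁, ν)` if there is a `τ`-invariant Borel probability measure `κ` on `Σ × ℝ̄₊`
whose marginal on `Σ` is `ν` and whose marginal on `ℝ̄₊` is `μ`. -/
def IsInvariantFor (a b : ℝ) (ν : Measure (ℕ → Bool)) (μ : Measure ℝ≥0∞) : Prop :=
  IsProbabilityMeasure μ ∧ μ {⊤} = 0 ∧
    ∃ κ : Measure ((ℕ → Bool) × ℝ≥0∞), IsProbabilityMeasure κ ∧
      MeasurePreserving (skewMap a b) κ κ ∧
      κ.map Prod.fst = ν ∧ κ.map Prod.snd = μ

/-- The Lyapunov exponent `λ(ν) = ν(C₀)·ln a + ν(C₁)·ln b` of a shift-invariant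
measure `ν` on `Σ`, where `Cᵢ = {ω̄ : ω̄₀ = i}`. -/
noncomputable def lyap (a b : ℝ) (ν : Measure (ℕ → Bool)) : ℝ :=
  (ν {ω | ω 0 = false}).toReal * Real.log a + (ν {ω | ω 0 = true}).toReal * Real.log b

open scoped ProbabilityTheory

/-! ### A pseudo-distance contracted by both generators -/

/-- The function `V_q(x, y) = |x - y| / (q + x + y)` on finite points of `ℝ≥0∞`. It is a bounded
substitute for the distance between `log (x + q / 2)` and `log (y + q / 2)`, of which it is an
increasing function. At infinite arguments the value is junk (`toReal ⊤ = 0`); only measures that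
do not charge `⊤` are integrated against it. -/
noncomputable def projDist (q : ℝ) (x y : ℝ≥0∞) : ℝ :=
  |x.toReal - y.toReal| / (q + x.toReal + y.toReal)

lemma measurable_projDist (q : ℝ) : Measurable fun z : ℝ≥0∞ × ℝ≥0∞ => projDist q z.1 z.2 := by
  unfold projDist
  fun_prop

lemma projDist_nonneg {q : ℝ} (hq : 0 < q) (x y : ℝ≥0∞) : 0 ≤ projDist q x y := by
  unfold projDist
  positivity

lemma projDist_le_one {q : ℝ} (hq : 0 < q) (x y : ℝ≥0∞) : projDist q x y ≤ 1 := by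
  unfold projDist
  have hx : 0 ≤ x.toReal := ENNReal.toReal_nonneg
  have hy : 0 ≤ y.toReal := ENNReal.toReal_nonneg
  rw [div_le_one (by positivity), abs_le]
  constructor <;> linarith

lemma projDist_anti {q θ : ℝ} (hq : 0 < q) (hθ : 0 < θ) (x y : ℝ≥0∞) :
    projDist (q + θ) x y ≤ projDist q x y := by
  unfold projDist
  have hx : 0 ≤ x.toReal := ENNReal.toReal_nonneg
  have hy : 0 ≤ y.toReal := ENNReal.toReal_nonneg
  gcongr
  linarith

/-- An affine map `x ↦ c x + d` pulls `V_q` back to `V_{(q + 2 d) / c}`. -/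
lemma projDist_affine_le {q θ c d x y : ℝ} (hq : 0 < q) (hθ : 0 < θ) (hc : 0 < c) (hd : 0 ≤ d)
    (hx : 0 ≤ x) (hy : 0 ≤ y) (h : c * (q + θ) ≤ q + 2 * d) :
    |c * x + d - (c * y + d)| / (q + (c * x + d) + (c * y + d)) ≤ |x - y| / (q + θ + x + y) := by
  have e : c * x + d - (c * y + d) = c * (x - y) := by ring
  rw [e, abs_mul, abs_of_pos hc, div_le_div_iff₀ (by positivity) (by positivity)]
  have := mul_le_mul_of_nonneg_left
    (show c * (q + θ + x + y) ≤ q + (c * x + d) + (c * y + d) by nlinarith) (abs_nonneg (x - y))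
  nlinarith

lemma projDist_Tmap_le {a b q θ : ℝ} (ha : 0 < a) (hb : 0 < b) (hq : 0 < q) (hθ : 0 < θ)
    (h0 : a * (q + θ) ≤ q) (h1 : b * (q + θ) ≤ q + 2) (i : Bool) {x y : ℝ≥0∞}
    (hx : x ≠ ⊤) (hy : y ≠ ⊤) :
    projDist q (Tmap a b i x) (Tmap a b i y) ≤ projDist (q + θ) x y := by
  have hx0 : 0 ≤ x.toReal := ENNReal.toReal_nonneg
  have hy0 : 0 ≤ y.toReal := ENNReal.toReal_nonneg
  unfold projDist Tmap
  cases i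
  · simpa [ENNReal.toReal_mul, ha.le] using
      projDist_affine_le (d := 0) hq hθ ha le_rfl hx0 hy0 (by linarith)
  · have e : ∀ z : ℝ≥0∞, z ≠ ⊤ → (ENNReal.ofReal b * z + 1).toReal = b * z.toReal + 1 := by
      intro z hz
      rw [ENNReal.toReal_add (ENNReal.mul_ne_top ENNReal.ofReal_ne_top hz) ENNReal.one_ne_top,
        ENNReal.toReal_mul, ENNReal.toReal_ofReal hb.le, ENNReal.toReal_one]
    simpa only [if_true, e x hx, e y hy] using
      projDist_affine_le (d := 1) hq hθ hb zero_le_one hx0 hy0 (by linarith)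

/-- A lower bound for `V_q - V_{q+θ}`, positive when `0 < ε`, on pairs that are bounded and
separated by `ε`. -/
lemma projDist_sub_ge {q θ ε S : ℝ} (hq : 0 < q) (hθ : 0 < θ) {x y : ℝ≥0∞}
    (hd : ε ≤ |x.toReal - y.toReal|) (hs : x.toReal + y.toReal ≤ S) :
    ε * θ / ((q + S) * (q + θ + S)) ≤ projDist q x y - projDist (q + θ) x y := by
  have hx0 : 0 ≤ x.toReal := ENNReal.toReal_nonneg
  have hy0 : 0 ≤ y.toReal := ENNReal.toReal_nonneg
  have e : projDist q x y - projDist (q + θ) x y = |x.toReal - y.toReal| * θ /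
      ((q + (x.toReal + y.toReal)) * (q + θ + (x.toReal + y.toReal))) := by
    unfold projDist
    field_simp
    ring
  have hqS : 0 ≤ q + S := by linarith
  rw [e]
  gcongr

/-! ### Couplings of invariant measures over the shift -/

/-- Couplings over the base `Σ` of two measures on `Σ × [0, ∞]`. -/
def IsCoupling (κ₁ κ₂ : Measure ((ℕ → Bool) × ℝ≥0∞))
    (γ : Measure ((ℕ → Bool) × ℝ≥0∞ × ℝ≥0∞)) : Prop :=
  γ.map (fun z => (z.1, z.2.1)) = κ₁ ∧ γ.map (fun z => (z.1, z.2.2)) = κ₂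

/-- The relatively independent coupling over a common marginal. -/
lemma exists_coupling (κ₁ κ₂ : Measure ((ℕ → Bool) × ℝ≥0∞))
    [IsProbabilityMeasure κ₁] [IsProbabilityMeasure κ₂] (h : κ₁.fst = κ₂.fst) :
    ∃ γ, IsCoupling κ₁ κ₂ γ := by
  refine ⟨κ₁.fst ⊗ₘ (κ₁.condKernel ×ₖ κ₂.condKernel), ?_, ?_⟩
  · have := Measure.compProd_map (μ := κ₁.fst) (κ := κ₁.condKernel ×ₖ κ₂.condKernel)
      (f := Prod.fst) measurable_fst
    rw [← ProbabilityTheory.Kernel.fst_eq, ProbabilityTheory.Kernel.fst_prod,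
      Measure.disintegrate] at this
    exact this.symm
  · have := Measure.compProd_map (μ := κ₁.fst) (κ := κ₁.condKernel ×ₖ κ₂.condKernel)
      (f := Prod.snd) measurable_snd
    rw [← ProbabilityTheory.Kernel.snd_eq, ProbabilityTheory.Kernel.snd_prod, h,
      Measure.disintegrate, ← h] at this
    exact this.symm

/-- The fibre product over `Σ` of the skew product with itself. -/
noncomputable def skewMap₂ (a b : ℝ) (z : (ℕ → Bool) × ℝ≥0∞ × ℝ≥0∞) :
    (ℕ → Bool) × ℝ≥0∞ × ℝ≥0∞ :=
  (shiftMap z.1, Tmap a b (z.1 0) z.2.1, Tmap a b (z.1 0) z.2.2)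

lemma measurable_skewMap₂ (a b : ℝ) : Measurable (skewMap₂ a b) := by
  have hs : Measurable shiftMap := by unfold shiftMap; fun_prop
  have hT : Measurable fun p : Bool × ℝ≥0∞ => Tmap a b p.1 p.2 := by
    refine measurable_from_prod_countable_right fun i => ?_
    unfold Tmap
    cases i
    · simp only [Bool.false_eq_true, if_false]; fun_prop
    · simp only [if_true]; fun_prop
  have h0 : Measurable fun z : (ℕ → Bool) × ℝ≥0∞ × ℝ≥0∞ => z.1 0 := by fun_prop
  have h1 : Measurable fun z : (ℕ → Bool) × ℝ≥0∞ × ℝ≥0∞ => z.2.1 := by fun_prop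
  have h2 : Measurable fun z : (ℕ → Bool) × ℝ≥0∞ × ℝ≥0∞ => z.2.2 := by fun_prop
  exact (hs.comp measurable_fst).prodMk
    ((hT.comp (h0.prodMk h1)).prodMk (hT.comp (h0.prodMk h2)))

lemma IsCoupling.map {a b : ℝ} {κ₁ κ₂ : Measure ((ℕ → Bool) × ℝ≥0∞)}
    (h₁ : MeasurePreserving (skewMap a b) κ₁ κ₁) (h₂ : MeasurePreserving (skewMap a b) κ₂ κ₂)
    {γ : Measure ((ℕ → Bool) × ℝ≥0∞ × ℝ≥0∞)} (hγ : IsCoupling κ₁ κ₂ γ) :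
    IsCoupling κ₁ κ₂ (γ.map (skewMap₂ a b)) := by
  have hF := measurable_skewMap₂ a b
  refine ⟨?_, ?_⟩
  · rw [Measure.map_map (by fun_prop) hF]
    conv_rhs => rw [← h₁.map_eq, ← hγ.1, Measure.map_map h₁.measurable (by fun_prop)]
    rfl
  · rw [Measure.map_map (by fun_prop) hF]
    conv_rhs => rw [← h₂.map_eq, ← hγ.2, Measure.map_map h₂.measurable (by fun_prop)]
    rfl

lemma IsCoupling.map_fst {κ₁ κ₂ : Measure ((ℕ → Bool) × ℝ≥0∞)}
    {γ : Measure ((ℕ → Bool) × ℝ≥0∞ × ℝ≥0∞)} (hγ : IsCoupling κ₁ κ₂ γ) :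
    γ.map (fun z => z.2.1) = κ₁.map Prod.snd := by
  rw [← hγ.1, Measure.map_map measurable_snd (by fun_prop)]
  rfl

lemma IsCoupling.map_snd {κ₁ κ₂ : Measure ((ℕ → Bool) × ℝ≥0∞)}
    {γ : Measure ((ℕ → Bool) × ℝ≥0∞ × ℝ≥0∞)} (hγ : IsCoupling κ₁ κ₂ γ) :
    γ.map (fun z => z.2.2) = κ₂.map Prod.snd := by
  rw [← hγ.2, Measure.map_map measurable_snd (by fun_prop)]
  rfl

/-- Some coupling makes the integral of `V_q - V_{q+θ}` as small as desired: along the orbit of a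
coupling under `skewMap₂` these integrals have sum at most `1`. -/
lemma exists_coupling_lt {a b q θ : ℝ} (ha : 0 < a) (hb : 0 < b) (hq : 0 < q) (hθ : 0 < θ)
    (h0 : a * (q + θ) ≤ q) (h1 : b * (q + θ) ≤ q + 2)
    {κ₁ κ₂ : Measure ((ℕ → Bool) × ℝ≥0∞)} [IsProbabilityMeasure κ₁] [IsProbabilityMeasure κ₂]
    (hκ : κ₁.fst = κ₂.fst)
    (h₁ : MeasurePreserving (skewMap a b) κ₁ κ₁) (h₂ : MeasurePreserving (skewMap a b) κ₂ κ₂)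
    (ht₁ : κ₁.map Prod.snd {⊤} = 0) (ht₂ : κ₂.map Prod.snd {⊤} = 0)
    {c : ℝ≥0∞} (hc : c ≠ 0) :
    ∃ γ, IsCoupling κ₁ κ₂ γ ∧
      ∫⁻ z, ENNReal.ofReal (projDist q z.2.1 z.2.2 - projDist (q + θ) z.2.1 z.2.2) ∂γ < c := by
  by_contra! hcon
  obtain ⟨γ₀, hγ₀⟩ := exists_coupling κ₁ κ₂ hκ
  have hm : ∀ r : ℝ, Measurable fun z : (ℕ → Bool) × ℝ≥0∞ × ℝ≥0∞ => projDist r z.2.1 z.2.2 :=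
    fun r => (measurable_projDist r).comp measurable_snd
  have step : ∀ γ, IsCoupling κ₁ κ₂ γ →
      ∫⁻ z, ENNReal.ofReal (projDist q z.2.1 z.2.2) ∂(γ.map (skewMap₂ a b)) + c
        ≤ ∫⁻ z, ENNReal.ofReal (projDist q z.2.1 z.2.2) ∂γ := by
    intro γ hγ
    have hx : ∀ᵐ z ∂γ, z.2.1 ≠ ⊤ := by
      rw [← hγ.map_fst, Measure.map_apply (by fun_prop) (measurableSet_singleton _)] at ht₁
      rw [ae_iff]
      simpa [Set.preimage] using ht₁
    have hy : ∀ᵐ z ∂γ, z.2.2 ≠ ⊤ := by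
      rw [← hγ.map_snd, Measure.map_apply (by fun_prop) (measurableSet_singleton _)] at ht₂
      rw [ae_iff]
      simpa [Set.preimage] using ht₂
    calc _ ≤ ∫⁻ z, ENNReal.ofReal (projDist (q + θ) z.2.1 z.2.2) ∂γ +
          ∫⁻ z, ENNReal.ofReal (projDist q z.2.1 z.2.2 - projDist (q + θ) z.2.1 z.2.2) ∂γ := by
          refine add_le_add ?_ (hcon γ hγ)
          rw [lintegral_map (hm q).ennreal_ofReal (measurable_skewMap₂ a b)]
          refine lintegral_mono_ae ?_
          filter_upwards [hx, hy] with z hzx hzy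
          exact ENNReal.ofReal_le_ofReal (projDist_Tmap_le ha hb hq hθ h0 h1 (z.1 0) hzx hzy)
      _ = _ := by
          rw [← lintegral_add_left (hm _).ennreal_ofReal]
          refine lintegral_congr fun z => ?_
          rw [← ENNReal.ofReal_add (projDist_nonneg (by positivity) _ _)
            (sub_nonneg.2 (projDist_anti hq hθ _ _)), add_sub_cancel]
  have iter : ∀ n : ℕ, ∃ γ, IsCoupling κ₁ κ₂ γ ∧
      ∫⁻ z, ENNReal.ofReal (projDist q z.2.1 z.2.2) ∂γ + n * c
        ≤ ∫⁻ z, ENNReal.ofReal (projDist q z.2.1 z.2.2) ∂γ₀ := by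
    intro n
    induction n with
    | zero => exact ⟨γ₀, hγ₀, by simp⟩
    | succ n ih =>
      obtain ⟨γ, hγ, hle⟩ := ih
      refine ⟨_, hγ.map h₁ h₂, le_trans ?_ hle⟩
      have := add_le_add_left (step γ hγ) (n * c)
      refine le_trans (le_of_eq ?_) this
      push_cast
      ring
  have hone : ∫⁻ z, ENNReal.ofReal (projDist q z.2.1 z.2.2) ∂γ₀ ≤ 1 := by
    have hu : γ₀ Set.univ = 1 := by
      have : γ₀.map (fun z => (z.1, z.2.1)) Set.univ = 1 := by rw [hγ₀.1]; exact measure_univ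
      rwa [Measure.map_apply (by fun_prop) MeasurableSet.univ] at this
    calc _ ≤ ∫⁻ _, 1 ∂γ₀ := lintegral_mono fun z =>
          ENNReal.ofReal_le_one.2 (projDist_le_one hq _ _)
      _ = 1 := by rw [lintegral_one, hu]
  obtain ⟨n, hn⟩ := ENNReal.exists_nat_mul_gt hc ENNReal.one_ne_top
  obtain ⟨γ, -, hle⟩ := iter n
  exact absurd ((le_add_self.trans hle).trans hone) (not_le.2 hn)

/-! ### Comparison of distribution functions -/

/-- The comparison of distribution functions, up to an error `ε` in the argument and the mass of
`μ₂` near infinity. -/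
lemma measure_Iic_le {a b : ℝ} (ha : 0 < a) (ha1 : a < 1) (hb : 1 < b)
    {ν : Measure (ℕ → Bool)} {μ₁ μ₂ : Measure ℝ≥0∞}
    (h₁ : IsInvariantFor a b ν μ₁) (h₂ : IsInvariantFor a b ν μ₂)
    {t ε M : ℝ≥0∞} (ht : t ≠ ⊤) (hε : ε ≠ 0) (hε' : ε ≠ ⊤) (hM : M ≠ ⊤) :
    μ₁ (Set.Iic t) ≤ μ₂ (Set.Iic (t + ε)) + μ₂ (Set.Ioi M) := by
  obtain ⟨-, ht₁, κ₁, _, hp₁, hf₁, rfl⟩ := h₁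
  obtain ⟨-, ht₂, κ₂, _, hp₂, hf₂, rfl⟩ := h₂
  -- any `q < 2 / (b - 1)` works; this one gives `(q + 2) / b = q + 1 / b`
  obtain ⟨q, θ, hq, hθ, h0, h1⟩ : ∃ q θ : ℝ, 0 < q ∧ 0 < θ ∧ a * (q + θ) ≤ q ∧
      b * (q + θ) ≤ q + 2 := by
    have hb1 : 0 < b - 1 := by linarith
    have hb0 : 0 < b := by linarith
    have ha0 : 0 < 1 - a := by linarith
    refine ⟨1 / (b - 1), min (1 / (b - 1) * (1 - a) / a) (1 / b), by positivity,
      lt_min (by positivity) (by positivity), ?_, ?_⟩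
    · have := mul_le_mul_of_nonneg_left (min_le_left (1 / (b - 1) * (1 - a) / a) (1 / b)) ha.le
      rw [mul_div_cancel₀ _ ha.ne'] at this
      linarith
    · have := mul_le_mul_of_nonneg_left (min_le_right (1 / (b - 1) * (1 - a) / a) (1 / b)) hb0.le
      rw [mul_one_div_cancel hb0.ne'] at this
      have e : (b - 1) * (1 / (b - 1)) = 1 := mul_one_div_cancel hb1.ne'
      linarith
  have hε0 : 0 < ε.toReal := ENNReal.toReal_pos hε hε'
  have ht0 : 0 ≤ t.toReal := ENNReal.toReal_nonneg
  have hM0 : 0 ≤ M.toReal := ENNReal.toReal_nonneg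
  obtain ⟨δ, hδ, hδle⟩ : ∃ δ : ℝ, 0 < δ ∧ ∀ x y : ℝ≥0∞, x ≤ t → t + ε < y → y ≤ M →
      δ ≤ projDist q x y - projDist (q + θ) x y := by
    refine ⟨ε.toReal * θ / ((q + (t.toReal + M.toReal)) * (q + θ + (t.toReal + M.toReal))),
      by positivity, fun x y hx hxy hy => projDist_sub_ge hq hθ ?_ ?_⟩
    · have e1 := ENNReal.toReal_mono ht hx
      have e2 := ENNReal.toReal_mono (ne_top_of_le_ne_top hM hy) hxy.le
      rw [ENNReal.toReal_add ht hε'] at e2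
      rw [abs_sub_comm]
      exact le_trans (by linarith) (le_abs_self _)
    · exact add_le_add (ENNReal.toReal_mono ht hx) (ENNReal.toReal_mono hM hy)
  have hδ0 : ENNReal.ofReal δ ≠ 0 := by simpa using hδ
  refine ENNReal.le_of_forall_pos_le_add fun η hη _ => ?_
  have hη0 : (η : ℝ≥0∞) ≠ 0 := by exact_mod_cast hη.ne'
  obtain ⟨γ, hγ, hlt⟩ := exists_coupling_lt ha (by linarith) hq hθ h0 h1
    (hf₁.trans hf₂.symm) hp₁ hp₂ ht₁ ht₂ (c := ENNReal.ofReal δ * η) (mul_ne_zero hδ0 hη0)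
  have hW : Measurable fun z : (ℕ → Bool) × ℝ≥0∞ × ℝ≥0∞ =>
      ENNReal.ofReal (projDist q z.2.1 z.2.2 - projDist (q + θ) z.2.1 z.2.2) :=
    (((measurable_projDist q).comp measurable_snd).sub
      ((measurable_projDist (q + θ)).comp measurable_snd)).ennreal_ofReal
  have hbad : γ {z | ENNReal.ofReal δ ≤
      ENNReal.ofReal (projDist q z.2.1 z.2.2 - projDist (q + θ) z.2.1 z.2.2)} ≤ η := by
    have := (mul_meas_ge_le_lintegral (μ := γ) hW (ENNReal.ofReal δ)).trans hlt.le
    exact (ENNReal.mul_le_mul_iff_right hδ0 ENNReal.ofReal_ne_top).1 this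
  rw [← hγ.map_fst, ← hγ.map_snd, Measure.map_apply (by fun_prop) measurableSet_Iic,
    Measure.map_apply (by fun_prop) measurableSet_Iic,
    Measure.map_apply (by fun_prop) measurableSet_Ioi]
  refine le_trans (measure_mono ?_) ((measure_union_le _ _).trans
    (add_le_add (measure_union_le _ _) hbad))
  intro z hz
  by_cases hy : z.2.2 ≤ t + ε
  · exact Or.inl (Or.inl hy)
  by_cases hyM : M < z.2.2
  · exact Or.inl (Or.inr hyM)
  · exact Or.inr (ENNReal.ofReal_le_ofReal (hδle _ _ hz (not_le.1 hy) (not_lt.1 hyM)))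

lemma measure_Iic_le_of_invariant {a b : ℝ} (ha : 0 < a) (ha1 : a < 1) (hb : 1 < b)
    {ν : Measure (ℕ → Bool)} {μ₁ μ₂ : Measure ℝ≥0∞}
    (h₁ : IsInvariantFor a b ν μ₁) (h₂ : IsInvariantFor a b ν μ₂) {t : ℝ≥0∞} (ht : t ≠ ⊤) :
    μ₁ (Set.Iic t) ≤ μ₂ (Set.Iic t) := by
  have : IsProbabilityMeasure μ₂ := h₂.1
  have hinv : Tendsto (fun n : ℕ => t + ((n : ℝ≥0∞))⁻¹) atTop (nhds t) := by
    simpa using tendsto_const_nhds.add ENNReal.tendsto_inv_nat_nhds_zero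
  have l1 : Tendsto (μ₂ ∘ fun n : ℕ => Set.Iic (t + ((n : ℝ≥0∞))⁻¹)) atTop
      (nhds (μ₂ (⋂ n : ℕ, Set.Iic (t + ((n : ℝ≥0∞))⁻¹)))) :=
    tendsto_measure_iInter_atTop (fun n => measurableSet_Iic.nullMeasurableSet)
      (fun m n hmn => Set.Iic_subset_Iic.2 (by gcongr)) ⟨0, measure_ne_top _ _⟩
  have e1 : (⋂ n : ℕ, Set.Iic (t + ((n : ℝ≥0∞))⁻¹)) = Set.Iic t := by
    ext x
    simp only [Set.mem_iInter, Set.mem_Iic]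
    exact ⟨fun h => ge_of_tendsto' hinv h, fun h n => h.trans le_self_add⟩
  have l2 : Tendsto (μ₂ ∘ fun n : ℕ => Set.Ioi (n : ℝ≥0∞)) atTop
      (nhds (μ₂ (⋂ n : ℕ, Set.Ioi (n : ℝ≥0∞)))) :=
    tendsto_measure_iInter_atTop (fun n => measurableSet_Ioi.nullMeasurableSet)
      (fun m n hmn => Set.Ioi_subset_Ioi (by exact_mod_cast hmn)) ⟨0, measure_ne_top _ _⟩
  have e2 : (⋂ n : ℕ, Set.Ioi (n : ℝ≥0∞)) = {⊤} := by
    ext x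
    simp only [Set.mem_iInter, Set.mem_Ioi, Set.mem_singleton_iff]
    refine ⟨fun h => ?_, fun h n => h ▸ ENNReal.natCast_lt_top n⟩
    exact ENNReal.eq_top_of_forall_nnreal_le fun r => by
      obtain ⟨n, hn⟩ := exists_nat_ge r
      exact le_trans (by exact_mod_cast hn) (h n).le
  have l3 := l1.add l2
  rw [e1, e2, h₂.2.1, add_zero] at l3
  refine ge_of_tendsto l3 ?_
  filter_upwards [eventually_gt_atTop 0] with n hn
  exact measure_Iic_le ha ha1 hb h₁ h₂ ht (by simp) (by simpa using hn.ne') (by simp)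

/-- **Corollary 3.3.** For any ergodic `σ`-invariant Borel probability measure `ν` on `Σ`,
there is at most one Borel probability measure invariant for `(T₀, T₁, ν)`. -/
theorem unique_invariant_measure (a b : ℝ) (ha : 0 < a) (ha1 : a < 1) (hb : 1 < b)
    (ν : Measure (ℕ → Bool)) [IsProbabilityMeasure ν] (hν : Ergodic shiftMap ν)
    (μ₁ μ₂ : Measure ℝ≥0∞)
    (h₁ : IsInvariantFor a b ν μ₁) (h₂ : IsInvariantFor a b ν μ₂) :
    μ₁ = μ₂ := by
  have := h₁.1
  have := h₂.1
  refine Measure.ext_of_Iic _ _ fun t => ?_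
  by_cases ht : t = ⊤
  · simp [ht]
  · exact le_antisymm (measure_Iic_le_of_invariant ha ha1 hb h₁ h₂ ht)
      (measure_Iic_le_of_invariant ha ha1 hb h₂ h₁ ht)
end

section
/- Let ν be an ergodic σ-invariant Borel probability measure on Σ. Then there exists a Borel probability measure invariant for (T₀,T₁,ν) if and only if the Lyapunov exponent λ(ν) = ν(C₀)·ln a + ν(C₁)·ln b is negative. -/
/-!
Put `c = 1/(b-1)`, so that `-c` is the fixed point of `T₁`, and consider the potential
`V(x) = ln (c + x)` on finite points. Its increment `V ∘ τ - V` equals `ln b` when `ω₀ = 1` and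
`ln ((c + a x)/(c + x)) > ln a` when `ω₀ = 0`; it extends to a continuous function `cocycle` on
the compact space `Σ × [0,∞]` whose value at `x = ∞` is the logarithmic slope of `T_{ω₀}`.

*An invariant measure forces `λ(ν) < 0`* (`lyap_neg_of_invariant`). If `κ` is `τ`-invariant and
gives no mass to `x = ∞`, the bounded coboundary `V ∘ τ - V` has `κ`-integral zero
(`integral_coboundary_eq_zero`). The slope is at most the cocycle, so `λ(ν) ≤ 0`. Equality would
make the two agree almost everywhere, hence `ω₀ = 1` almost surely, and then `λ(ν) = ln b > 0`.

*If `λ(ν) < 0`, an invariant measure exists.* Let `κ` be a weak limit of the Cesàro averages of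
`τⁿ(ν × δ₀)` (`krylov_bogoliubov`); it is `τ`-invariant with marginal `ν`. The Birkhoff sums of the
cocycle along orbits starting at `x = 0` are `V(τⁿ(ω, 0)) - ln c ≥ 0`, so the `κ`-integral of the
cocycle is nonnegative. Were `κ` concentrated on `x = ∞`, this integral would be `λ(ν) < 0`. So
the `τ`-invariant set `{x ≠ ∞}` has positive `κ`-mass (`exists_skew_invariant_of_lyap_neg`).
Conditioning `κ` on it gives an invariant measure whose marginal on `Σ` is shift-invariant and
absolutely continuous with respect to `ν`, hence equal to `ν` by ergodicity
(`exists_invariant_of_skew_invariant`).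
-/

open MeasureTheory Filter
open scoped ENNReal

open Set Topology
open scoped BoundedContinuousFunction

/-! ### Krylov–Bogoliubov averages -/

/-- **Krylov–Bogoliubov**: along some proper filter finer than `atTop`, the Cesàro averages of the
push-forwards of `ρ` under a continuous self-map `T` of a compact space converge weakly to a
`T`-invariant probability measure. -/
lemma krylov_bogoliubov {X : Type*} [TopologicalSpace X] [CompactSpace X] [T2Space X]
    [HasOuterApproxClosed X] [MeasurableSpace X] [BorelSpace X] {T : X → X} (hT : Continuous T)
    (ρ : Measure X) [IsProbabilityMeasure ρ] :
    ∃ κ : Measure X, IsProbabilityMeasure κ ∧ MeasurePreserving T κ κ ∧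
      ∃ F : Filter ℕ, F.NeBot ∧ ∀ f : X →ᵇ ℝ,
        Tendsto (fun n : ℕ => ((n : ℝ) + 1)⁻¹ * ∑ k ∈ Finset.range (n + 1), ∫ x, f (T^[k] x) ∂ρ)
          F (𝓝 (∫ x, f x ∂κ)) := by
  have hTk : ∀ k, Measurable (T^[k]) := fun k => (hT.iterate k).measurable
  have hprob : ∀ k, IsProbabilityMeasure (ρ.map T^[k]) := fun k =>
    Measure.isProbabilityMeasure_map (hTk k).aemeasurable
  let m : ℕ → Measure X := fun n =>
    ((n : ℝ≥0∞) + 1)⁻¹ • ∑ k ∈ Finset.range (n + 1), ρ.map T^[k]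
  have hm : ∀ n, IsProbabilityMeasure (m n) := by
    intro n
    constructor
    simp only [m, Measure.smul_apply, Measure.finsetSum_apply, measure_univ, Finset.sum_const,
      Finset.card_range, smul_eq_mul, nsmul_eq_mul, mul_one, Nat.cast_add, Nat.cast_one]
    exact ENNReal.inv_mul_cancel (by simp) (by finiteness)
  let P : ℕ → ProbabilityMeasure X := fun n => ⟨m n, hm n⟩
  have hP : ∀ (f : X →ᵇ ℝ) n, ∫ x, f x ∂(P n : Measure X) =
      ((n : ℝ) + 1)⁻¹ * ∑ k ∈ Finset.range (n + 1), ∫ x, f (T^[k] x) ∂ρ := by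
    intro f n
    change ∫ x, f x ∂(m n) = _
    simp only [m]
    rw [integral_smul_measure, integral_finsetSum_measure (fun k _ => f.integrable _)]
    congr 1
    · rw [ENNReal.toReal_inv, ENNReal.toReal_add (by simp) (by simp)]
      simp
    · exact Finset.sum_congr rfl fun k _ =>
        integral_map (hTk k).aemeasurable f.continuous.aestronglyMeasurable
  let U : Ultrafilter ℕ := Ultrafilter.of atTop
  have hU : (U : Filter ℕ) ≤ atTop := Ultrafilter.of_le atTop
  obtain ⟨κ, -, hκ⟩ := (isCompact_univ (X := ProbabilityMeasure X)).ultrafilter_le_nhds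
    (U.map P) (by simp)
  have hlim : Tendsto P U (𝓝 κ) := hκ
  rw [ProbabilityMeasure.tendsto_iff_forall_integral_tendsto] at hlim
  simp_rw [hP] at hlim
  refine ⟨κ, inferInstance, ⟨hT.measurable, ?_⟩, U, inferInstance, hlim⟩
  have := Measure.isProbabilityMeasure_map (μ := (κ : Measure X)) hT.measurable.aemeasurable
  refine ext_of_forall_integral_eq_of_IsFiniteMeasure fun f => ?_
  rw [integral_map hT.measurable.aemeasurable f.continuous.aestronglyMeasurable]
  have h1 := hlim f
  have h2 := hlim (f.compContinuous ⟨T, hT⟩)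
  -- The averages of `f ∘ T` and `f` differ by a telescoping sum divided by `n + 1`.
  have h3 : Tendsto (fun n : ℕ => ((n : ℝ) + 1)⁻¹ *
      (∫ x, f (T^[n + 1] x) ∂ρ - ∫ x, f x ∂ρ)) U (𝓝 0) := by
    refine Tendsto.mono_left ?_ hU
    refine tendsto_zero_iff_norm_tendsto_zero.2 ?_
    have h0 : Tendsto (fun n : ℕ => ((n : ℝ) + 1)⁻¹ * (‖f‖ + ‖f‖)) atTop (𝓝 0) := by
      have := (tendsto_one_div_add_atTop_nhds_zero_nat (𝕜 := ℝ)).mul_const (‖f‖ + ‖f‖)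
      simpa using this
    have hb : ∀ k, ‖∫ x, f (T^[k] x) ∂ρ‖ ≤ ‖f‖ := fun k => by
      simpa using norm_integral_le_of_norm_le_const (μ := ρ)
        (Eventually.of_forall fun x => f.norm_coe_le_norm (T^[k] x))
    refine squeeze_zero (fun _ => norm_nonneg _) (fun n => ?_) h0
    rw [norm_mul, Real.norm_of_nonneg (by positivity)]
    gcongr
    exact (norm_sub_le _ _).trans (add_le_add (hb _) (hb 0))
  have h4 := h2.sub h1
  have h5 : ∀ n : ℕ, ((n : ℝ) + 1)⁻¹ * ∑ k ∈ Finset.range (n + 1),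
        ∫ x, (f.compContinuous ⟨T, hT⟩) (T^[k] x) ∂ρ -
      ((n : ℝ) + 1)⁻¹ * ∑ k ∈ Finset.range (n + 1), ∫ x, f (T^[k] x) ∂ρ =
      ((n : ℝ) + 1)⁻¹ * (∫ x, f (T^[n + 1] x) ∂ρ - ∫ x, f x ∂ρ) := by
    intro n
    rw [← mul_sub, ← Finset.sum_sub_distrib]
    congr 1
    have := Finset.sum_range_sub (fun k => ∫ x, f (T^[k] x) ∂ρ) (n + 1)
    simp only [Function.iterate_zero, id] at this
    rw [← this]
    refine Finset.sum_congr rfl fun k _ => ?_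
    simp [Function.iterate_succ_apply']
  simp_rw [h5] at h4
  exact sub_eq_zero.1 (tendsto_nhds_unique h4 h3)

/-! ### Bounded coboundaries -/

/-- A bounded coboundary `V ∘ T - V` has integral zero, although `V` itself need not be
integrable. -/
lemma integral_coboundary_eq_zero {X : Type*} [MeasurableSpace X] {κ : Measure X}
    [IsProbabilityMeasure κ] {T : X → X} (hT : MeasurePreserving T κ κ) {V g : X → ℝ}
    (hV : Measurable V) {l B : ℝ} (hl : ∀ x, l ≤ V x) (hB : ∀ x, |g x| ≤ B)
    (hg : ∀ᵐ x ∂κ, V (T x) = V x + g x) : ∫ x, g x ∂κ = 0 := by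
  -- Truncating `V` from above makes it integrable and does not increase its increments.
  let W : ℕ → X → ℝ := fun M x => min (V x) M
  have hWm : ∀ M, Measurable (W M) := fun M => hV.min measurable_const
  have hWi : ∀ M, Integrable (W M) κ := fun M => by
    refine Integrable.of_bound (C := max |l| M) (hWm M).aestronglyMeasurable
      (Eventually.of_forall fun x => ?_)
    have h0 : (0 : ℝ) ≤ M := Nat.cast_nonneg M
    rw [Real.norm_eq_abs, abs_le]
    constructor
    · have h1 := neg_abs_le l
      have h2 := le_max_left |l| (M : ℝ)
      exact le_min (by linarith [hl x]) (by linarith [abs_nonneg l])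
    · exact (min_le_right _ _).trans (le_max_right _ _)
  have hzero : ∀ M, ∫ x, (W M (T x) - W M x) ∂κ = 0 := fun M => by
    have hTi : Integrable (fun x => W M (T x)) κ := hT.integrable_comp_of_integrable (hWi M)
    rw [integral_sub hTi (hWi M), sub_eq_zero]
    have := integral_map (μ := κ) hT.measurable.aemeasurable
      (hT.map_eq.symm ▸ (hWm M).aestronglyMeasurable : AEStronglyMeasurable (W M) (κ.map T))
    rw [← this, hT.map_eq]
  have hlim : Tendsto (fun M : ℕ => ∫ x, (W M (T x) - W M x) ∂κ) atTop (𝓝 (∫ x, g x ∂κ)) := by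
    refine tendsto_integral_of_dominated_convergence (fun _ => B)
      (fun M => (((hWm M).comp hT.measurable).sub (hWm M)).aestronglyMeasurable)
      (integrable_const B) (fun M => ?_) ?_
    · filter_upwards [hg] with x hx
      calc ‖W M (T x) - W M x‖ ≤ max |V (T x) - V x| |(M : ℝ) - M| :=
            abs_min_sub_min_le_max _ _ _ _
        _ ≤ B := by
          rw [hx]
          simpa [(abs_nonneg _).trans (hB x)] using hB x
    · filter_upwards [hg] with x hx
      refine tendsto_const_nhds.congr' ?_
      filter_upwards [eventually_ge_atTop ⌈max (V x) (V (T x))⌉₊] with M hM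
      have h1 : max (V x) (V (T x)) ≤ M := Nat.ceil_le.1 hM
      simp only [W]
      rw [min_eq_left ((le_max_left _ _).trans h1), min_eq_left ((le_max_right _ _).trans h1), hx]
      ring
  simp_rw [hzero] at hlim
  exact (tendsto_nhds_unique hlim tendsto_const_nhds)

/-! ### The logarithmic cocycle of the skew product -/

/-- The potential `V(ω, x) = ln (c + x)` with `c = 1/(b-1)`. Since `-c` is the fixed point of `T₁`,
the map `T₁` increases it by exactly `ln b`. The value at `x = ∞` is a junk value. -/
noncomputable def potential (b : ℝ) (z : (ℕ → Bool) × ℝ≥0∞) : ℝ :=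
  Real.log (1 / (b - 1) + z.2.toReal)

/-- The cocycle `V ∘ τ - V` of the potential, extended continuously to `x = ∞`. On `C₀` it is
`ln ((c + a x) / (c + x))`, written as `ln (a + (1 - a) c / (c + x))` so that it takes the value
`ln a` at `x = ∞`. -/
noncomputable def cocycle (a b : ℝ) (z : (ℕ → Bool) × ℝ≥0∞) : ℝ :=
  if z.1 0 then Real.log b else
    Real.log (a + (1 - a) * (1 / (b - 1)) * ((ENNReal.ofReal (1 / (b - 1)) + z.2)⁻¹).toReal)

/-- The logarithmic slope of the map `T_{ω₀}`. -/
noncomputable def logSlope (a b : ℝ) (ω : ℕ → Bool) : ℝ :=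
  if ω 0 then Real.log b else Real.log a

lemma continuous_of_first_symbol {Y Z : Type*} [TopologicalSpace Y] [TopologicalSpace Z]
    {F : Bool → Y → Z} (hF : ∀ i, Continuous (F i)) :
    Continuous fun z : (ℕ → Bool) × Y => F (z.1 0) z.2 := by
  have h : Continuous fun p : Bool × Y => F p.1 p.2 := continuous_prod_of_discrete_left.2 hF
  have h0 : Continuous fun z : (ℕ → Bool) × Y => (z.1 0, z.2) := by fun_prop
  exact h.comp h0

lemma continuous_shiftMap : Continuous shiftMap :=
  continuous_pi fun i => continuous_apply (i + 1)

lemma continuous_Tmap (a b : ℝ) (i : Bool) : Continuous (Tmap a b i) := by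
  cases i
  · exact ENNReal.continuous_const_mul ENNReal.ofReal_ne_top
  · exact (ENNReal.continuous_const_mul ENNReal.ofReal_ne_top).add continuous_const

lemma continuous_skewMap (a b : ℝ) : Continuous (skewMap a b) :=
  (continuous_shiftMap.comp continuous_fst).prodMk
    (continuous_of_first_symbol (continuous_Tmap a b))

lemma continuous_logSlope (a b : ℝ) : Continuous (logSlope a b) :=
  (continuous_of_discreteTopology (f := fun i : Bool => if i then Real.log b else Real.log a)).comp
    (continuous_apply 0)

lemma Tmap_ne_top_iff {a b : ℝ} (ha : 0 < a) (hb : 1 < b) (i : Bool) (x : ℝ≥0∞) :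
    Tmap a b i x ≠ ⊤ ↔ x ≠ ⊤ := by
  have hb0 : 0 < b := by linarith
  cases i <;> simp [Tmap, ENNReal.mul_eq_top, ha, hb0, not_le.2]

lemma continuous_cocycle {a b : ℝ} (ha : 0 < a) (ha1 : a < 1) (hb : 1 < b) :
    Continuous (cocycle a b) := by
  have hc : 0 < 1 / (b - 1) := by have := sub_pos.2 hb; positivity
  refine continuous_of_first_symbol (F := fun i x => if i then Real.log b else
    Real.log (a + (1 - a) * (1 / (b - 1)) *
      ((ENNReal.ofReal (1 / (b - 1)) + x)⁻¹).toReal)) fun i => ?_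
  cases i
  · have h1 : Continuous fun x : ℝ≥0∞ => ((ENNReal.ofReal (1 / (b - 1)) + x)⁻¹).toReal := by
      have h0 : Continuous fun x : ℝ≥0∞ => (ENNReal.ofReal (1 / (b - 1)) + x)⁻¹ :=
        continuous_inv.comp (continuous_const_add _)
      refine ENNReal.continuousOn_toReal.comp_continuous h0 fun x => ?_
      have : ENNReal.ofReal (1 / (b - 1)) ≠ 0 := by simpa using hb
      simp only [mem_ofPred_eq, ne_eq, ENNReal.inv_eq_top, add_eq_zero, this, false_and,
        not_false_eq_true]
    simp only [Bool.false_eq_true, if_false]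
    refine (continuous_const.add (continuous_const.mul h1)).log fun x => ?_
    have := sub_pos.2 ha1
    have hu : 0 ≤ ((ENNReal.ofReal (1 / (b - 1)) + x)⁻¹).toReal := ENNReal.toReal_nonneg
    exact (add_pos_of_pos_of_nonneg ha (mul_nonneg (mul_pos this hc).le hu)).ne'
  · simpa using continuous_const

lemma cocycle_top {a b : ℝ} {z : (ℕ → Bool) × ℝ≥0∞} (hz : z.2 = ⊤) :
    cocycle a b z = logSlope a b z.1 := by
  simp [cocycle, logSlope, hz]

/-- At finite points the cocycle strictly exceeds the logarithmic slope of the contraction `T₀`. -/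
lemma log_lt_cocycle {a b : ℝ} (ha : 0 < a) (ha1 : a < 1) (hb : 1 < b)
    {z : (ℕ → Bool) × ℝ≥0∞} (hz : z.2 ≠ ⊤) (h0 : z.1 0 = false) :
    Real.log a < cocycle a b z := by
  have hc : 0 < 1 / (b - 1) := by have := sub_pos.2 hb; positivity
  have := sub_pos.2 ha1
  have h : 0 < ((ENNReal.ofReal (1 / (b - 1)) + z.2)⁻¹).toReal := by
    refine ENNReal.toReal_pos (by simp [hz]) ?_
    have : ENNReal.ofReal (1 / (b - 1)) ≠ 0 := by simpa using hb
    simp only [ne_eq, ENNReal.inv_eq_top, add_eq_zero, this, false_and, not_false_eq_true]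
  simp only [cocycle, h0, Bool.false_eq_true, if_false]
  exact Real.log_lt_log ha (by linarith [mul_pos (mul_pos this hc) h])

lemma logSlope_le_cocycle {a b : ℝ} (ha : 0 < a) (ha1 : a < 1) (hb : 1 < b)
    (z : (ℕ → Bool) × ℝ≥0∞) : logSlope a b z.1 ≤ cocycle a b z := by
  by_cases hz : z.2 = ⊤
  · exact (cocycle_top hz).ge
  cases h : z.1 0
  · simpa [logSlope, h] using (log_lt_cocycle ha ha1 hb hz h).le
  · simp [logSlope, cocycle, h]

lemma potential_skewMap {a b : ℝ} (ha : 0 < a) (hb : 1 < b)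
    {z : (ℕ → Bool) × ℝ≥0∞} (hz : z.2 ≠ ⊤) :
    potential b (skewMap a b z) = potential b z + cocycle a b z := by
  obtain ⟨ω, x⟩ := z
  lift x to NNReal using hz
  have hb1 := sub_pos.2 hb
  have hb0 : 0 < b := by linarith
  have hc : 0 < 1 / (b - 1) := by positivity
  have hx : (0 : ℝ) ≤ x := x.2
  have hcx : 0 < 1 / (b - 1) + (x : ℝ) := by positivity
  cases h : ω 0
  · have hu : ((ENNReal.ofReal (1 / (b - 1)) + (x : ℝ≥0∞))⁻¹).toReal =
        (1 / (b - 1) + (x : ℝ))⁻¹ := by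
      rw [ENNReal.toReal_inv, ENNReal.toReal_add (by simp) (by simp),
        ENNReal.toReal_ofReal hc.le, ENNReal.coe_toReal]
    simp only [potential, cocycle, skewMap, Tmap, h, Bool.false_eq_true, if_false, hu,
      ENNReal.toReal_mul, ENNReal.toReal_ofReal ha.le, ENNReal.coe_toReal]
    have e : 1 / (b - 1) + a * (x : ℝ) = (1 / (b - 1) + x) *
        (a + (1 - a) * (1 / (b - 1)) * (1 / (b - 1) + (x : ℝ))⁻¹) := by
      field_simp
      ring
    have h1 : 0 < 1 / (b - 1) + a * (x : ℝ) := by positivity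
    rw [← Real.log_mul hcx.ne' (fun h' => by rw [e, h', mul_zero] at h1; exact h1.false), ← e]
  · simp only [potential, cocycle, skewMap, Tmap, h, if_true]
    rw [ENNReal.toReal_add (by finiteness) (by simp), ENNReal.toReal_mul,
      ENNReal.toReal_ofReal hb0.le, ENNReal.coe_toReal, ENNReal.toReal_one,
      ← Real.log_mul hcx.ne' hb0.ne']
    congr 1
    field_simp
    ring

lemma log_le_potential {b : ℝ} (hb : 1 < b) (z : (ℕ → Bool) × ℝ≥0∞) :
    Real.log (1 / (b - 1)) ≤ potential b z := by
  have hc : 0 < 1 / (b - 1) := by have := sub_pos.2 hb; positivity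
  exact Real.log_le_log hc (by simp)

lemma integral_logSlope (a b : ℝ) (ν : Measure (ℕ → Bool)) [IsProbabilityMeasure ν] :
    ∫ ω, logSlope a b ω ∂ν = lyap a b ν := by
  have hm : ∀ i, MeasurableSet {ω : ℕ → Bool | ω 0 = i} := fun i =>
    measurable_pi_apply (X := fun _ : ℕ => Bool) 0 (measurableSet_singleton i)
  have h : logSlope a b = fun ω =>
      {ω : ℕ → Bool | ω 0 = false}.indicator (fun _ => Real.log a) ω +
      {ω : ℕ → Bool | ω 0 = true}.indicator (fun _ => Real.log b) ω := by
    ext ω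
    cases h : ω 0 <;> simp [logSlope, Set.indicator, h]
  rw [h, integral_add ((integrable_const _).indicator (hm _))
    ((integrable_const _).indicator (hm _)), integral_indicator_const _ (hm _),
    integral_indicator_const _ (hm _)]
  rfl

/-! ### The two implications -/

lemma lyap_neg_of_invariant {a b : ℝ} (ha : 0 < a) (ha1 : a < 1) (hb : 1 < b)
    {ν : Measure (ℕ → Bool)} [IsProbabilityMeasure ν] {μ : Measure ℝ≥0∞}
    (h : IsInvariantFor a b ν μ) : lyap a b ν < 0 := by
  obtain ⟨-, hμ, κ, hκ, hinv, rfl, rfl⟩ := h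
  have hfin : ∀ᵐ z ∂κ, z.2 ≠ ⊤ := by
    rw [Measure.map_apply measurable_snd (measurableSet_singleton _)] at hμ
    exact measure_eq_zero_iff_ae_notMem.1 hμ
  let g : ((ℕ → Bool) × ℝ≥0∞) →ᵇ ℝ := BoundedContinuousFunction.mkOfCompact ⟨cocycle a b, continuous_cocycle ha ha1 hb⟩
  have hg0 : ∫ z, cocycle a b z ∂κ = 0 := by
    refine integral_coboundary_eq_zero hinv (V := potential b) (B := ‖g‖) ?_
      (log_le_potential hb) (fun z => g.norm_coe_le_norm z)
      (hfin.mono fun z hz => potential_skewMap ha hb hz)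
    exact Real.measurable_log.comp
      (measurable_const.add (ENNReal.measurable_toReal.comp measurable_snd))
  let f : ((ℕ → Bool) × ℝ≥0∞) →ᵇ ℝ :=
    BoundedContinuousFunction.mkOfCompact ⟨fun z => logSlope a b z.1, (continuous_logSlope a b).comp continuous_fst⟩
  have hgi : Integrable (cocycle a b) κ := g.integrable κ
  have hfi : Integrable (fun z : (ℕ → Bool) × ℝ≥0∞ => logSlope a b z.1) κ := f.integrable κ
  have hle := logSlope_le_cocycle ha ha1 hb
  have hly : ∫ z, logSlope a b z.1 ∂κ = lyap a b (κ.map Prod.fst) := by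
    rw [← integral_logSlope, integral_map measurable_fst.aemeasurable
      (continuous_logSlope a b).aestronglyMeasurable]
  have hle0 : ∫ z, logSlope a b z.1 ∂κ ≤ 0 := hg0 ▸ integral_mono hfi hgi hle
  rw [← hly]
  refine hle0.lt_of_ne fun h0 => ?_
  -- In the equality case the slope equals the cocycle almost everywhere, which forces `ω₀ = 1`.
  have hae : (fun z => cocycle a b z - logSlope a b z.1) =ᵐ[κ] 0 := by
    rw [← integral_eq_zero_iff_of_nonneg (fun z => sub_nonneg.2 (hle z)) (hgi.sub hfi),
      integral_sub hgi hfi, hg0, h0, sub_zero]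
  have hone : (fun z : (ℕ → Bool) × ℝ≥0∞ => logSlope a b z.1) =ᵐ[κ] fun _ => Real.log b := by
    filter_upwards [hae, hfin] with z hz hz2
    cases h1 : z.1 0
    · have := log_lt_cocycle ha ha1 hb hz2 h1
      simp only [logSlope, h1, Pi.zero_apply, Bool.false_eq_true, if_false] at hz
      linarith
    · simp [logSlope, h1]
  rw [integral_congr_ae hone] at h0
  simp only [integral_const, probReal_univ, one_smul] at h0
  exact (Real.log_pos hb).ne' h0

/-- Negative exponent: the Krylov–Bogoliubov limit of the orbits started at `x = 0` does not live
on `x = ∞` alone. -/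
lemma exists_skew_invariant_of_lyap_neg {a b : ℝ} (ha : 0 < a) (ha1 : a < 1) (hb : 1 < b)
    {ν : Measure (ℕ → Bool)} [IsProbabilityMeasure ν] (hν : MeasurePreserving shiftMap ν ν)
    (hl : lyap a b ν < 0) :
    ∃ κ : Measure ((ℕ → Bool) × ℝ≥0∞), IsProbabilityMeasure κ ∧
      MeasurePreserving (skewMap a b) κ κ ∧ κ.map Prod.fst = ν ∧ κ {z | z.2 ≠ ⊤} ≠ 0 := by
  have hmk : Measurable fun ω : ℕ → Bool => (ω, (0 : ℝ≥0∞)) := by fun_prop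
  have := Measure.isProbabilityMeasure_map (μ := ν) hmk.aemeasurable
  obtain ⟨κ, hκ, hinv, F, hF, hlim⟩ := krylov_bogoliubov (continuous_skewMap a b)
    (ν.map fun ω => (ω, (0 : ℝ≥0∞)))
  have hst : Continuous (skewMap a b) := continuous_skewMap a b
  have hint : ∀ (f : ((ℕ → Bool) × ℝ≥0∞) →ᵇ ℝ) k,
      ∫ z, f ((skewMap a b)^[k] z) ∂(ν.map fun ω => (ω, (0 : ℝ≥0∞))) =
      ∫ ω, f ((skewMap a b)^[k] (ω, 0)) ∂ν := fun f k =>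
    integral_map hmk.aemeasurable (f.continuous.comp (hst.iterate k)).aestronglyMeasurable
  have hfst : κ.map Prod.fst = ν := by
    have := Measure.isProbabilityMeasure_map (μ := κ) measurable_fst.aemeasurable
    refine ext_of_forall_integral_eq_of_IsFiniteMeasure fun φ => ?_
    rw [integral_map measurable_fst.aemeasurable φ.continuous.aestronglyMeasurable]
    have h1 := hlim (φ.compContinuous ⟨Prod.fst, continuous_fst⟩)
    have h2 : ∀ k, ∫ z, (φ.compContinuous ⟨Prod.fst, continuous_fst⟩) ((skewMap a b)^[k] z)
        ∂(ν.map fun ω => (ω, (0 : ℝ≥0∞))) = ∫ ω, φ ω ∂ν := by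
      intro k
      rw [hint]
      have hs : Function.Semiconj Prod.fst (skewMap a b) shiftMap := fun z => rfl
      have h3 : ∀ ω, (φ.compContinuous ⟨Prod.fst, continuous_fst⟩) ((skewMap a b)^[k] (ω, 0)) =
          φ (shiftMap^[k] ω) := fun ω => by
        simp [(hs.iterate_right k).eq (ω, 0)]
      simp_rw [h3]
      have hk := hν.iterate k
      rw [← integral_map (μ := ν) hk.measurable.aemeasurable
        φ.continuous.aestronglyMeasurable, hk.map_eq]
    simp_rw [h2] at h1
    refine tendsto_nhds_unique h1 (tendsto_const_nhds.congr fun n => ?_)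
    have : (n : ℝ) + 1 ≠ 0 := by positivity
    simp
    field_simp
  refine ⟨κ, hκ, hinv, hfst, fun h0 => hl.not_ge ?_⟩
  let g : ((ℕ → Bool) × ℝ≥0∞) →ᵇ ℝ := BoundedContinuousFunction.mkOfCompact ⟨cocycle a b, continuous_cocycle ha ha1 hb⟩
  -- The Birkhoff sums of the cocycle telescope to `V(τⁿ(ω, 0)) - ln c`, and `ln c` is the minimum
  -- of the potential.
  have hsum : ∀ (n : ℕ) ω, ((skewMap a b)^[n] (ω, 0)).2 ≠ ⊤ ∧
      ∑ k ∈ Finset.range n, g ((skewMap a b)^[k] (ω, 0)) =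
        potential b ((skewMap a b)^[n] (ω, 0)) - Real.log (1 / (b - 1)) := by
    intro n ω
    induction n with
    | zero => simp [potential]
    | succ n ih =>
      rw [Finset.sum_range_succ, ih.2, Function.iterate_succ_apply', potential_skewMap ha hb ih.1]
      refine ⟨(Tmap_ne_top_iff ha hb _ _).2 ih.1, ?_⟩
      change _ + cocycle a b _ = _
      ring
  have hg : 0 ≤ ∫ z, cocycle a b z ∂κ := by
    refine ge_of_tendsto (hlim g) (Eventually.of_forall fun n => ?_)
    simp_rw [hint]
    rw [← integral_finsetSum]
    · refine mul_nonneg (by positivity) (integral_nonneg fun ω => ?_)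
      simp only [(hsum (n + 1) ω).2]
      exact sub_nonneg.2 (log_le_potential hb _)
    · intro k _
      exact (g.compContinuous ⟨fun ω => (skewMap a b)^[k] (ω, 0),
        (hst.iterate k).comp (by fun_prop)⟩).integrable ν
  have hae : cocycle a b =ᵐ[κ] fun z => logSlope a b z.1 := by
    filter_upwards [measure_eq_zero_iff_ae_notMem.1 h0] with z hz
    exact cocycle_top (by simpa using hz)
  rwa [integral_congr_ae hae, ← integral_map (μ := κ) measurable_fst.aemeasurable
    (continuous_logSlope a b).aestronglyMeasurable, hfst, integral_logSlope] at hg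

/-- Conditioning an invariant measure on the invariant set `{x ≠ ∞}` keeps its marginal on the
shift space, by ergodicity. -/
lemma exists_invariant_of_skew_invariant {a b : ℝ} (ha : 0 < a) (hb : 1 < b)
    {ν : Measure (ℕ → Bool)} [IsProbabilityMeasure ν] (hν : Ergodic shiftMap ν)
    {κ : Measure ((ℕ → Bool) × ℝ≥0∞)} [IsProbabilityMeasure κ]
    (hinv : MeasurePreserving (skewMap a b) κ κ) (hfst : κ.map Prod.fst = ν)
    (h0 : κ {z | z.2 ≠ ⊤} ≠ 0) : ∃ μ : Measure ℝ≥0∞, IsInvariantFor a b ν μ := by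
  set A : Set ((ℕ → Bool) × ℝ≥0∞) := {z | z.2 ≠ ⊤} with hA
  have hAm : MeasurableSet A := (measurable_snd (measurableSet_singleton ⊤)).compl
  have hpre : skewMap a b ⁻¹' A = A := by
    ext z
    exact Tmap_ne_top_iff ha hb _ _
  have hres : MeasurePreserving (skewMap a b) (κ.restrict A) (κ.restrict A) := by
    simpa only [hpre] using hinv.restrict_preimage hAm
  let η : Measure ((ℕ → Bool) × ℝ≥0∞) := (κ A)⁻¹ • κ.restrict A
  have hη : IsProbabilityMeasure η := by
    constructor
    simp [η, ENNReal.inv_mul_cancel h0 (measure_ne_top κ A)]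
  have hηinv : MeasurePreserving (skewMap a b) η η := hres.smul_measure _
  have hηfst := Measure.isProbabilityMeasure_map (μ := η) measurable_fst.aemeasurable
  have hηsnd := Measure.isProbabilityMeasure_map (μ := η) measurable_snd.aemeasurable
  have hac : η ≪ κ := (Measure.smul_absolutelyContinuous).trans
    Measure.restrict_le_self.absolutelyContinuous
  refine ⟨η.map Prod.snd, hηsnd, ?_, η, hη, hηinv, ?_, rfl⟩
  · rw [Measure.map_apply measurable_snd (measurableSet_singleton _)]
    have : (Prod.snd ⁻¹' {⊤} : Set ((ℕ → Bool) × ℝ≥0∞)) ∩ A = ∅ := by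
      ext z
      simp [hA]
    simp [η, Measure.restrict_apply (measurable_snd (measurableSet_singleton _)), this]
  · refine hν.eq_of_absolutelyContinuous ⟨hν.measurable, ?_⟩ (hfst ▸ hac.map measurable_fst)
    conv_rhs => rw [← hηinv.map_eq]
    rw [Measure.map_map hν.measurable measurable_fst,
      Measure.map_map measurable_fst hηinv.measurable]
    rfl

/-- **Theorem E / Theorem 3.4 (existence).** For an ergodic `σ`-invariant probability
measure `ν` on `Σ`, a probability measure invariant for `(T₀, T₁, ν)` exists if and only
if the Lyapunov exponent `λ(ν) = ν(C₀)·ln a + ν(C₁)·ln b` is negative. -/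
theorem exists_invariant_iff_lyap_neg (a b : ℝ) (ha : 0 < a) (ha1 : a < 1) (hb : 1 < b)
    (ν : Measure (ℕ → Bool)) [IsProbabilityMeasure ν] (hν : Ergodic shiftMap ν) :
    (∃ μ : Measure ℝ≥0∞, IsInvariantFor a b ν μ) ↔ lyap a b ν < 0 := by
  refine ⟨fun ⟨μ, hμ⟩ => lyap_neg_of_invariant ha ha1 hb hμ, fun hl => ?_⟩
  obtain ⟨κ, hκ, hinv, hfst, h0⟩ :=
    exists_skew_invariant_of_lyap_neg ha ha1 hb hν.toMeasurePreserving hl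
  exact exists_invariant_of_skew_invariant ha hb hν hinv hfst h0
end
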